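/- arXiv:2011.05584 — 5 statements merged into one kernel-verified Lean document; each statement's English description precedes it below -/
import Mathlib

section
/- If (K_j)_{j=1}^m is a finite collection of pairwise disjoint compact subsets of C, then φ(⋃_{j=1}^m K_j) = Σ_{j=1}^m φ(K_j). -/
open MeasureTheory Matrix Set Filter Topology
open scoped ENNReal

noncomputable section

/-- The space `C` of continuous functions on `[0,1]` vanishing at `0`,
with the supremum metric (inherited from `C([0,1], ℝ)`). -/
abbrev Cz : Type := {f : C(Set.Icc (0:ℝ) 1, ℝ) // f ⟨0, ⟨le_refl 0, zero_le_one⟩⟩ = 0}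

/-- The projection `π_n : C → ℝ^n`, `x ↦ (x(t_1), …, x(t_n))`. -/
def proj (t : ℕ → ℝ) (ht : ∀ k, t k ∈ Set.Ioc (0:ℝ) 1) (n : ℕ) (x : Cz) : Fin n → ℝ :=
  fun i => (x : C(Set.Icc (0:ℝ) 1, ℝ)) ⟨t i, Set.Ioc_subset_Icc_self (ht i)⟩

/-- The covariance matrix `M_n` with entries `min (t j) (t r)`. -/
def covM (t : ℕ → ℝ) (n : ℕ) : Matrix (Fin n) (Fin n) ℝ :=
  Matrix.of fun j r => min (t (j : ℕ)) (t (r : ℕ))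

/-- The centered Gaussian measure on `ℝ^n` with (positive definite) covariance matrix `M`:
the measure with density `u ↦ ((2π)^n det M)^{-1/2} exp (-⟨u, M⁻¹ u⟩ / 2)` w.r.t. Lebesgue
measure. -/
def gauss (n : ℕ) (M : Matrix (Fin n) (Fin n) ℝ) : Measure (Fin n → ℝ) :=
  volume.withDensity fun u =>
    ENNReal.ofReal ((((2 * Real.pi) ^ n * M.det) ^ (-(1:ℝ)/2 : ℝ)) *
      Real.exp (-(u ⬝ᵥ M⁻¹.mulVec u) / 2))

/-- `φ(K) = inf_{n ≥ 1} ν_n (π_n(K))`. -/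
def phi (t : ℕ → ℝ) (ht : ∀ k, t k ∈ Set.Ioc (0:ℝ) 1) (K : Set Cz) : ℝ≥0∞ :=
  ⨅ n : ℕ, gauss (n+1) (covM t (n+1)) (proj t ht (n+1) '' K)

/-- `μ(A) = sup {φ(K) : K ⊆ A, K compact}`. -/
def mu (t : ℕ → ℝ) (ht : ∀ k, t k ∈ Set.Ioc (0:ℝ) 1) (A : Set Cz) : ℝ≥0∞ :=
  ⨆ (K : Set Cz) (_ : K ⊆ A) (_ : IsCompact K), phi t ht K


lemma quad_aux {ι : Type*} [DecidableEq ι] (N : ℕ) : ∀ (S : Finset ι) (t x : ι → ℝ), S.card = N →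
    Set.InjOn t S → (∀ i ∈ S, 0 < t i) →
    0 ≤ ∑ i ∈ S, ∑ j ∈ S, x i * x j * min (t i) (t j) ∧
    (∑ i ∈ S, ∑ j ∈ S, x i * x j * min (t i) (t j) = 0 → ∀ i ∈ S, x i = 0) := by
  induction N with
  | zero =>
    intro S t x hS _ _
    rw [Finset.card_eq_zero] at hS
    subst hS
    simp
  | succ N ih =>
    intro S t x hS hinj hpos
    have hne : S.Nonempty := by rw [← Finset.card_pos]; omega
    obtain ⟨a, ha, hmin⟩ := S.exists_min_image t hne
    obtain ⟨h1, h2⟩ := ih (S.erase a) (fun i => t i - t a) x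
      (by rw [Finset.card_erase_of_mem ha]; omega)
      (by
        intro i hi j hj hij
        have hi' := Finset.mem_of_mem_erase (Finset.mem_coe.1 hi)
        have hj' := Finset.mem_of_mem_erase (Finset.mem_coe.1 hj)
        exact hinj hi' hj' (by simpa using hij))
      (by
        intro i hi
        have hi' := Finset.mem_of_mem_erase hi
        have : t a ≠ t i := fun h => Finset.ne_of_mem_erase hi (hinj hi' ha h.symm)
        have := lt_of_le_of_ne (hmin i hi') this
        linarith)
    have key : ∑ i ∈ S, ∑ j ∈ S, x i * x j * min (t i) (t j) =
        t a * (∑ i ∈ S, x i) ^ 2 + ∑ i ∈ S.erase a, ∑ j ∈ S.erase a,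
          x i * x j * min (t i - t a) (t j - t a) := by
      have e1 : ∑ i ∈ S.erase a, ∑ j ∈ S.erase a, x i * x j * min (t i - t a) (t j - t a)
          = ∑ i ∈ S, ∑ j ∈ S, x i * x j * min (t i - t a) (t j - t a) := by
        rw [← Finset.sum_erase (s := S) (a := a)]
        · refine Finset.sum_congr rfl fun i hi => ?_
          refine Finset.sum_erase _ ?_
          have := hmin i (Finset.mem_of_mem_erase hi)
          rw [min_eq_right (by linarith)]; ring
        · refine Finset.sum_eq_zero fun j hj => ?_
          have := hmin j hj
          rw [min_eq_left (by linarith)]; ring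
      rw [e1, sq, Finset.sum_mul_sum, Finset.mul_sum, ← Finset.sum_add_distrib]
      refine Finset.sum_congr rfl fun i _ => ?_
      rw [Finset.mul_sum, ← Finset.sum_add_distrib]
      refine Finset.sum_congr rfl fun j _ => ?_
      rw [min_sub_sub_right]; ring
    have hsq : 0 ≤ t a * (∑ i ∈ S, x i) ^ 2 := mul_nonneg (hpos a ha).le (sq_nonneg _)
    rw [key]
    refine ⟨by linarith, fun h0 => ?_⟩
    have hz := h2 (by linarith)
    have hs : t a * (∑ i ∈ S, x i) ^ 2 = 0 := by linarith
    have hs' : ∑ i ∈ S, x i = 0 := by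
      rcases mul_eq_zero.1 hs with h | h
      · exact absurd h (hpos a ha).ne'
      · exact pow_eq_zero_iff (two_ne_zero) |>.1 h
    have hxa : x a = 0 := by
      rw [← Finset.add_sum_erase S x ha, Finset.sum_eq_zero hz] at hs'
      linarith
    intro i hi
    by_cases hia : i = a
    · rw [hia, hxa]
    · exact hz i (Finset.mem_erase.2 ⟨hia, hi⟩)

lemma covM_det_pos (t : ℕ → ℝ) (ht : ∀ k, t k ∈ Set.Ioc (0:ℝ) 1)
    (htinj : Function.Injective t) (n : ℕ) : 0 < (covM t n).det := by
  have hpd : (covM t n).PosDef := by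
    refine Matrix.PosDef.of_dotProduct_mulVec_pos ?_ ?_
    · ext i j
      simp [covM, min_comm]
    · intro x hx
      obtain ⟨h1, h2⟩ := quad_aux n (Finset.univ : Finset (Fin n)) (fun i => t i) x (by simp)
        (fun i _ j _ h => Fin.ext (htinj h)) (fun i _ => (ht i).1)
      have e : star x ⬝ᵥ (covM t n *ᵥ x) =
          ∑ i, ∑ j, x i * x j * min (t (i:ℕ)) (t (j:ℕ)) := by
        simp only [dotProduct, mulVec, covM, Matrix.of_apply, Finset.mul_sum, star_trivial]
        refine Finset.sum_congr rfl fun i _ => Finset.sum_congr rfl fun j _ => ?_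
        ring
      rw [e]
      refine lt_of_le_of_ne h1 fun h => hx ?_
      funext i
      exact h2 h.symm i (Finset.mem_univ _)
  exact hpd.det_pos

/-- Schur complement -/
def schur (t : ℕ → ℝ) (n : ℕ) : ℝ :=
  t n - (fun i : Fin n => min (t i) (t n)) ⬝ᵥ ((covM t n)⁻¹ *ᵥ (fun i : Fin n => min (t i) (t n)))

lemma covM_det_succ (t : ℕ → ℝ) (n : ℕ) (h : 0 < (covM t n).det) :
    (covM t (n+1)).det = (covM t n).det * schur t n := by
  let b : Fin n → ℝ := fun i => min (t i) (t n)
  have e : (covM t (n+1)).submatrix (finSumFinEquiv : Fin n ⊕ Fin 1 ≃ Fin (n+1)) finSumFinEquiv =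
      Matrix.fromBlocks (covM t n) (Matrix.of fun i _ => b i) (Matrix.of fun _ i => b i)
        (Matrix.of fun _ _ => t n) := by
    ext i j
    rcases i with i | i <;> rcases j with j | j <;> simp [covM, b, min_comm]
  rw [← Matrix.det_submatrix_equiv_self finSumFinEquiv, e]
  let _ : Invertible (covM t n) := Matrix.invertibleOfIsUnitDet _ (isUnit_iff_ne_zero.2 h.ne')
  rw [Matrix.det_fromBlocks₁₁]
  congr 1
  rw [Matrix.det_fin_one, Matrix.invOf_eq_nonsing_inv, Matrix.mul_assoc]
  rfl

lemma quad_succ (t : ℕ → ℝ) (n : ℕ) (h : 0 < (covM t n).det) (h' : 0 < (covM t (n+1)).det)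
    (hs : 0 < schur t n) (u : Fin n → ℝ) (v : ℝ) :
    (Fin.snoc u v : Fin (n+1) → ℝ) ⬝ᵥ (covM t (n+1))⁻¹.mulVec (Fin.snoc u v : Fin (n+1) → ℝ) =
      u ⬝ᵥ (covM t n)⁻¹.mulVec u +
       (v - (fun i : Fin n => min (t i) (t n)) ⬝ᵥ ((covM t n)⁻¹ *ᵥ u)) ^ 2 / schur t n := by
  set b : Fin n → ℝ := fun i => min (t i) (t n) with hb
  set A := covM t n with hA
  set s := schur t n with hsd
  have hAu : IsUnit A.det := isUnit_iff_ne_zero.2 h.ne'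
  have hMu : IsUnit (covM t (n+1)).det := isUnit_iff_ne_zero.2 h'.ne'
  set k := (v - b ⬝ᵥ (A⁻¹ *ᵥ u)) / s with hk
  have hks : k * s = v - b ⬝ᵥ (A⁻¹ *ᵥ u) := by rw [hk]; field_simp
  have hsdef : s = t n - b ⬝ᵥ (A⁻¹ *ᵥ b) := rfl
  set z : Fin n → ℝ := A⁻¹ *ᵥ u - k • (A⁻¹ *ᵥ b) with hz
  have hAz : A *ᵥ z = u - k • b := by
    rw [hz, Matrix.mulVec_sub, Matrix.mulVec_smul, Matrix.mulVec_mulVec, Matrix.mulVec_mulVec,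
      Matrix.mul_nonsing_inv _ hAu, Matrix.one_mulVec, Matrix.one_mulVec]
  have hbz : b ⬝ᵥ z = v - t n * k := by
    rw [hz, dotProduct_sub, dotProduct_smul, smul_eq_mul]
    linear_combination hks - k * hsdef
  have hM : covM t (n+1) *ᵥ (Fin.snoc z k : Fin (n+1) → ℝ) = (Fin.snoc u v : Fin (n+1) → ℝ) := by
    funext i
    refine Fin.lastCases ?_ (fun i => ?_) i
    · simp only [mulVec, dotProduct, Fin.sum_univ_castSucc, Fin.snoc_castSucc, Fin.snoc_last]
      have : ∑ x : Fin n, covM t (n+1) (Fin.last n) x.castSucc * z x = b ⬝ᵥ z := by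
        simp [dotProduct, covM, hb, min_comm]
      rw [this, hbz]
      simp [covM]
    · have := congrFun hAz i
      simp only [mulVec, dotProduct, Fin.sum_univ_castSucc, Fin.snoc_castSucc, Fin.snoc_last] at this ⊢
      have e : ∑ x : Fin n, covM t (n+1) i.castSucc x.castSucc * z x = ∑ x, A i x * z x := rfl
      rw [e, this]
      simp [covM, hb]; ring
  have hinv : (covM t (n+1))⁻¹ *ᵥ (Fin.snoc u v : Fin (n+1) → ℝ) = (Fin.snoc z k : Fin (n+1) → ℝ) := by
    rw [← hM, Matrix.mulVec_mulVec, Matrix.nonsing_inv_mul _ hMu, Matrix.one_mulVec]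
  have hsymm : u ⬝ᵥ (A⁻¹ *ᵥ b) = b ⬝ᵥ (A⁻¹ *ᵥ u) := by
    have hAT : (A⁻¹)ᵀ = A⁻¹ := by
      rw [Matrix.transpose_nonsing_inv]
      congr 1
      ext i j
      simp [hA, covM, min_comm]
    rw [dotProduct_mulVec, ← Matrix.mulVec_transpose, hAT, dotProduct_comm]
  rw [hinv]
  have : (Fin.snoc u v : Fin (n+1) → ℝ) ⬝ᵥ (Fin.snoc z k : Fin (n+1) → ℝ) = u ⬝ᵥ z + v * k := by
    simp [dotProduct, Fin.sum_univ_castSucc]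
  rw [this, hz, dotProduct_sub, dotProduct_smul, hsymm, smul_eq_mul, hk]
  field_simp
  ring

lemma dens_succ (t : ℕ → ℝ) (n : ℕ) (h : 0 < (covM t n).det) (h' : 0 < (covM t (n+1)).det)
    (hs : 0 < schur t n) (u : Fin n → ℝ) (v : ℝ) :
    ENNReal.ofReal ((((2 * Real.pi) ^ (n+1) * (covM t (n+1)).det) ^ (-(1:ℝ)/2 : ℝ)) *
      Real.exp (-((Fin.snoc u v : Fin (n+1) → ℝ) ⬝ᵥ
        (covM t (n+1))⁻¹.mulVec (Fin.snoc u v : Fin (n+1) → ℝ)) / 2)) =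
    ENNReal.ofReal ((((2 * Real.pi) ^ n * (covM t n).det) ^ (-(1:ℝ)/2 : ℝ)) *
      Real.exp (-(u ⬝ᵥ (covM t n)⁻¹.mulVec u) / 2)) *
    ProbabilityTheory.gaussianPDF ((fun i : Fin n => min (t i) (t n)) ⬝ᵥ ((covM t n)⁻¹ *ᵥ u))
      (schur t n).toNNReal v := by
  rw [quad_succ t n h h' hs, covM_det_succ t n h, ProbabilityTheory.gaussianPDF_def,
    ProbabilityTheory.gaussianPDFReal_def]
  beta_reduce
  rw [← ENNReal.ofReal_mul (by positivity)]
  congr 1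
  have hc : ((2 * Real.pi) ^ (n+1) * ((covM t n).det * schur t n)) =
      ((2 * Real.pi) ^ n * (covM t n).det) * (2 * Real.pi * schur t n) := by ring
  have hr : (2 * Real.pi * schur t n) ^ (-(1:ℝ)/2 : ℝ) = (√(2 * Real.pi * schur t n))⁻¹ := by
    rw [Real.sqrt_eq_rpow, ← Real.rpow_neg (by positivity)]
    norm_num
  rw [hc, Real.mul_rpow (by positivity) (by positivity), hr]
  simp only [Real.coe_toNNReal _ hs.le]
  have he : ∀ q r s : ℝ, 0 < s → Real.exp (-(q + r / s) / 2) =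
      Real.exp (-q / 2) * Real.exp (-r / (2 * s)) := by
    intro q r s hs
    rw [← Real.exp_add]
    congr 1
    field_simp
    ring
  rw [he _ _ _ hs]
  ring

lemma gauss_marginal (t : ℕ → ℝ) (ht : ∀ k, t k ∈ Set.Ioc (0:ℝ) 1)
    (htinj : Function.Injective t) (n : ℕ) (S : Set (Fin n → ℝ)) (hS : MeasurableSet S) :
    gauss (n+1) (covM t (n+1)) ((fun w (i : Fin n) => w i.castSucc) ⁻¹' S) =
      gauss n (covM t n) S := by
  have h := covM_det_pos t ht htinj n
  have h' := covM_det_pos t ht htinj (n+1)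
  have hs : 0 < schur t n := by
    rw [covM_det_succ t n h] at h'
    exact (pos_iff_pos_of_mul_pos h').1 h
  have hv : (schur t n).toNNReal ≠ 0 := (Real.toNNReal_pos.2 hs).ne'
  have hmeas : Measurable (fun (w : Fin (n+1) → ℝ) (i : Fin n) => w i.castSucc) := by fun_prop
  have hdm : ∀ (N : ℕ) (c : ℝ) (A : Matrix (Fin N) (Fin N) ℝ), Measurable fun u : Fin N → ℝ =>
      ENNReal.ofReal (c * Real.exp (-(u ⬝ᵥ A.mulVec u) / 2)) := by
    intro N c A
    simp only [dotProduct, mulVec]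
    fun_prop
  rw [gauss, gauss, withDensity_apply _ (hmeas hS), withDensity_apply _ hS,
    ← lintegral_indicator (hmeas hS), ← lintegral_indicator hS]
  have hvp := (volume_preserving_piFinSuccAbove (fun _ : Fin (n+1) => ℝ) (Fin.last n)).symm
  rw [← hvp.lintegral_comp ((hdm _ _ _).indicator (hmeas hS)), Measure.volume_eq_prod]
  refine (lintegral_prod_symm' _
    (((hdm _ _ _).indicator (hmeas hS)).comp hvp.measurable)).trans ?_
  simp only [Function.comp_apply]
  refine lintegral_congr fun u => ?_
  have hsn : ∀ v : ℝ, (MeasurableEquiv.piFinSuccAbove (fun _ : Fin (n+1) => ℝ) (Fin.last n)).symm (v, u)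
      = (Fin.snoc u v : Fin (n+1) → ℝ) := by
    intro v
    simp [MeasurableEquiv.piFinSuccAbove, Fin.insertNthEquiv, Fin.insertNth_last']
  simp only [hsn]
  by_cases hu : u ∈ S
  · have : ∀ v : ℝ, (Fin.snoc u v : Fin (n+1) → ℝ) ∈
        ((fun (w : Fin (n+1) → ℝ) (i : Fin n) => w i.castSucc) ⁻¹' S) := by
      intro v; simpa using hu
    simp only [Set.indicator_of_mem (this _), Set.indicator_of_mem hu, dens_succ t n h h' hs]
    rw [lintegral_const_mul _ (ProbabilityTheory.measurable_gaussianPDF _ _),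
      ProbabilityTheory.lintegral_gaussianPDF_eq_one _ hv, mul_one]
  · have : ∀ v : ℝ, (Fin.snoc u v : Fin (n+1) → ℝ) ∉
        ((fun (w : Fin (n+1) → ℝ) (i : Fin n) => w i.castSucc) ⁻¹' S) := by
      intro v; simpa using hu
    simp only [Set.indicator_of_notMem (this _), Set.indicator_of_notMem hu, lintegral_zero]

lemma proj_continuous (t : ℕ → ℝ) (ht : ∀ k, t k ∈ Set.Ioc (0:ℝ) 1) (n : ℕ) :
    Continuous (proj t ht n) := by
  unfold proj
  refine continuous_pi fun i => ?_
  exact (continuous_eval_const _).comp continuous_subtype_val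

lemma phi_antitone (t : ℕ → ℝ) (ht : ∀ k, t k ∈ Set.Ioc (0:ℝ) 1)
    (htinj : Function.Injective t) (K : Set Cz) (hK : IsCompact K) :
    Antitone fun n : ℕ => gauss (n+1) (covM t (n+1)) (proj t ht (n+1) '' K) := by
  refine antitone_nat_of_succ_le fun n => ?_
  rw [← gauss_marginal t ht htinj (n+1) _
    (hK.image (proj_continuous t ht (n+1))).measurableSet]
  refine measure_mono ?_
  rintro _ ⟨x, hx, rfl⟩
  exact ⟨x, hx, rfl⟩

lemma phi_tendsto (t : ℕ → ℝ) (ht : ∀ k, t k ∈ Set.Ioc (0:ℝ) 1)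
    (htinj : Function.Injective t) (K : Set Cz) (hK : IsCompact K) :
    Tendsto (fun n : ℕ => gauss (n+1) (covM t (n+1)) (proj t ht (n+1) '' K)) atTop
      (𝓝 (phi t ht K)) :=
  tendsto_atTop_iInf (phi_antitone t ht htinj K hK)

lemma proj_sep (t : ℕ → ℝ) (ht : ∀ k, t k ∈ Set.Ioc (0:ℝ) 1)
    (htdense : Set.Icc (0:ℝ) 1 ⊆ closure (Set.range t)) (x y : Cz)
    (hxy : ∀ n, proj t ht n x = proj t ht n y) : x = y := by
  apply Subtype.ext
  apply ContinuousMap.ext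
  have hpt : ∀ k, x.1 ⟨t k, Set.Ioc_subset_Icc_self (ht k)⟩ =
      y.1 ⟨t k, Set.Ioc_subset_Icc_self (ht k)⟩ := fun k =>
    congrFun (hxy (k+1)) (Fin.last k)
  have hd : DenseRange (fun k => (⟨t k, Set.Ioc_subset_Icc_self (ht k)⟩ : Set.Icc (0:ℝ) 1)) := by
    intro p
    rw [closure_subtype, ← Set.range_comp]
    exact htdense p.2
  exact fun p => congrFun (hd.equalizer x.1.continuous y.1.continuous (funext hpt)) p

lemma proj_disj (t : ℕ → ℝ) (ht : ∀ k, t k ∈ Set.Ioc (0:ℝ) 1)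
    (htdense : Set.Icc (0:ℝ) 1 ⊆ closure (Set.range t)) (K L : Set Cz) (hK : IsCompact K)
    (hL : IsCompact L) (h : Disjoint K L) :
    ∀ᶠ n in atTop, Disjoint (proj t ht (n+1) '' K) (proj t ht (n+1) '' L) := by
  let Z : ℕ → Set (Cz × Cz) := fun n => {p | proj t ht n p.1 = proj t ht n p.2}
  have hZc : ∀ n, IsClosed (Z n) := fun n =>
    isClosed_eq ((proj_continuous t ht n).comp continuous_fst)
      ((proj_continuous t ht n).comp continuous_snd)
  have hZa : ∀ m n, m ≤ n → Z n ⊆ Z m := by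
    intro m n hmn p hp
    funext i
    exact congrFun hp ⟨i, i.2.trans_le hmn⟩
  obtain ⟨N, hN⟩ := (hK.prod hL).elim_directed_family_closed Z hZc
    (by
      rw [Set.eq_empty_iff_forall_notMem]
      rintro ⟨x, y⟩ ⟨⟨hx, hy⟩, hz⟩
      have := proj_sep t ht htdense x y (fun n => Set.mem_iInter.1 hz n)
      subst this
      exact Set.disjoint_left.1 h hx hy)
    (fun m n => ⟨max m n, hZa _ _ (le_max_left _ _), hZa _ _ (le_max_right _ _)⟩)
  filter_upwards [eventually_ge_atTop N] with n hn
  rw [Set.disjoint_left]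
  rintro _ ⟨x, hx, rfl⟩ ⟨y, hy, hxy⟩
  have : (x, y) ∈ (K ×ˢ L) ∩ Z N := ⟨⟨hx, hy⟩, hZa N (n+1) (by omega) hxy.symm⟩
  rw [hN] at this
  exact this

/-- `φ` is finitely additive on pairwise disjoint compact sets. -/
theorem stmt5 (t : ℕ → ℝ) (ht : ∀ k, t k ∈ Set.Ioc (0:ℝ) 1)
    (htinj : Function.Injective t)
    (htdense : Set.Icc (0:ℝ) 1 ⊆ closure (Set.range t))
    (m : ℕ) (K : Fin m → Set Cz) (hK : ∀ j, IsCompact (K j))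
    (hdisj : ∀ i j, i ≠ j → Disjoint (K i) (K j)) :
    phi t ht (⋃ j, K j) = ∑ j, phi t ht (K j) := by
  have h1 := phi_tendsto t ht htinj (⋃ j, K j) (isCompact_iUnion hK)
  have h2 := tendsto_finsetSum Finset.univ
    (fun j _ => phi_tendsto t ht htinj (K j) (hK j))
  refine tendsto_nhds_unique h1 (h2.congr' ?_)
  have hev : ∀ᶠ n in atTop, ∀ i j, i ≠ j →
      Disjoint (proj t ht (n+1) '' K i) (proj t ht (n+1) '' K j) := by
    refine eventually_all.2 fun i => eventually_all.2 fun j => ?_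
    by_cases hij : i = j
    · exact Eventually.of_forall fun n h => absurd hij h
    · exact (proj_disj t ht htdense _ _ (hK i) (hK j) (hdisj i j hij)).mono fun n h _ => h
  filter_upwards [hev] with n hn
  rw [Set.image_iUnion, measure_iUnion (fun i j hij => hn i j hij)
    (fun j => ((hK j).image (proj_continuous t ht (n+1))).measurableSet), tsum_fintype]

end
end

section
/- If A and B are disjoint Borel subsets of C, then μ(A ∪ B) = μ(A) + μ(B). -/
open MeasureTheory Matrix Set Filter Topology
open scoped ENNReal

noncomputable section

instance : MeasurableSpace Cz := borel Cz
instance : BorelSpace Cz := ⟨rfl⟩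


lemma aux_pi_density (n : ℕ) :
    Measure.pi (fun _ : Fin n => ProbabilityTheory.gaussianReal 0 1) =
      volume.withDensity (fun u : Fin n → ℝ => ENNReal.ofReal (∏ i, ProbabilityTheory.gaussianPDFReal 0 1 (u i))) := by
  refine Measure.pi_eq (fun s hs => ?_)
  rw [withDensity_apply _ (MeasurableSet.univ_pi hs), volume_pi, Measure.restrict_pi_pi,
    ← ofReal_integral_eq_lintegral_ofReal]
  · rw [integral_fintype_prod_eq_prod (f := fun i x => ProbabilityTheory.gaussianPDFReal 0 1 x),
      ENNReal.ofReal_prod_of_nonneg]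
    · refine Finset.prod_congr rfl fun i _ => ?_
      rw [ProbabilityTheory.gaussianReal_apply_eq_integral _ one_ne_zero]
    · intro i _
      exact integral_nonneg fun x => ProbabilityTheory.gaussianPDFReal_nonneg _ _ _
  · exact Integrable.fintype_prod (f := fun i x => ProbabilityTheory.gaussianPDFReal 0 1 x)
      fun i => (ProbabilityTheory.integrable_gaussianPDFReal 0 1).restrict
  · exact Filter.Eventually.of_forall fun x =>
      Finset.prod_nonneg fun i _ => ProbabilityTheory.gaussianPDFReal_nonneg _ _ _

lemma aux_prod_pdf (n : ℕ) (u : Fin n → ℝ) :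
    ∏ i, ProbabilityTheory.gaussianPDFReal 0 1 (u i) =
      ((2 * Real.pi) ^ n) ^ (-(1:ℝ)/2 : ℝ) * Real.exp (-(u ⬝ᵥ u) / 2) := by
  simp only [ProbabilityTheory.gaussianPDFReal, Finset.prod_mul_distrib, ← Real.exp_sum]
  congr 1
  · simp only [Finset.prod_const, Finset.card_univ, Fintype.card_fin, NNReal.coe_one, mul_one]
    rw [neg_div, Real.rpow_neg (by positivity), ← Real.sqrt_eq_rpow, inv_pow]
    congr 1
    rw [← Real.sqrt_sq (show 0 ≤ √(2 * Real.pi) ^ n by positivity), ← pow_mul, mul_comm n 2,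
      pow_mul, Real.sq_sqrt (by positivity)]
  · congr 1
    simp [dotProduct, Finset.sum_div, ← Finset.sum_neg_distrib, neg_div, sq]

lemma aux_map_gauss (n : ℕ) (L : Matrix (Fin n) (Fin n) ℝ) (hL : L.det ≠ 0) :
    (Measure.pi (fun _ : Fin n => ProbabilityTheory.gaussianReal 0 1)).map (fun u => L.mulVec u) =
      gauss n (L * Lᵀ) := by
  have hmeas : Measurable (fun u : Fin n → ℝ => L.mulVec u) := by
    exact (Continuous.matrix_mulVec continuous_const continuous_id).measurable
  have hvol := Real.map_matrix_volume_pi_eq_smul_volume_pi hL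
  have hfun : (fun u => L.mulVec u) = (toLin' L : (Fin n → ℝ) → (Fin n → ℝ)) := by
    ext u; simp
  have hdet : IsUnit L.det := isUnit_iff_ne_zero.2 hL
  have key : ∀ u : Fin n → ℝ, (L.mulVec u) ⬝ᵥ (L * Lᵀ)⁻¹.mulVec (L.mulVec u) = u ⬝ᵥ u := by
    intro u
    rw [Matrix.mul_inv_rev, Matrix.mulVec_mulVec, Matrix.mul_assoc, Matrix.nonsing_inv_mul _ hdet,
      Matrix.mul_one, ← Matrix.transpose_nonsing_inv, Matrix.mulVec_transpose,
      dotProduct_comm, ← Matrix.dotProduct_mulVec, Matrix.mulVec_mulVec,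
      Matrix.nonsing_inv_mul _ hdet, Matrix.one_mulVec]
  set g : (Fin n → ℝ) → ℝ≥0∞ := fun y => ENNReal.ofReal (((2 * Real.pi) ^ n) ^ (-(1:ℝ)/2 : ℝ) *
      Real.exp (-(y ⬝ᵥ (L * Lᵀ)⁻¹.mulVec y) / 2)) with hg
  have hgm : Measurable g := by
    refine ENNReal.measurable_ofReal.comp (Continuous.measurable ?_)
    have : Continuous fun y : Fin n → ℝ => y ⬝ᵥ (L * Lᵀ)⁻¹.mulVec y :=
      continuous_id.dotProduct (Continuous.matrix_mulVec continuous_const continuous_id)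
    fun_prop
  ext s hs
  rw [Measure.map_apply hmeas hs, aux_pi_density, withDensity_apply _ (hmeas hs), gauss,
    withDensity_apply _ hs]
  have h1 : ∫⁻ u in (fun u => L.mulVec u) ⁻¹' s,
      ENNReal.ofReal (∏ i, ProbabilityTheory.gaussianPDFReal 0 1 (u i)) =
      ∫⁻ u in (fun u => L.mulVec u) ⁻¹' s, g (L.mulVec u) := by
    refine lintegral_congr fun u => ?_
    rw [aux_prod_pdf, hg]
    simp only [key]
  rw [h1, ← setLIntegral_map hs hgm hmeas, hfun, hvol, Measure.restrict_smul, lintegral_smul_measure,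
    smul_eq_mul, ← lintegral_const_mul _ hgm]
  refine lintegral_congr fun y => ?_
  rw [hg]
  simp only
  rw [← ENNReal.ofReal_mul (abs_nonneg _), ← mul_assoc]
  congr 2
  rw [Matrix.det_mul, Matrix.det_transpose, Real.mul_rpow (by positivity) (mul_self_nonneg _),
    mul_comm]
  congr 1
  rw [neg_div, Real.rpow_neg (mul_self_nonneg _), ← Real.sqrt_eq_rpow, Real.sqrt_mul_self_eq_abs,
    abs_inv]

open scoped InnerProductSpace in
lemma aux_vecs : ∃ v : ℝ → Lp ℝ 2 (volume : Measure ℝ),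
    ∀ s r : ℝ, 0 ≤ s → 0 ≤ r → ⟪v s, v r⟫_ℝ = min s r := by
  refine ⟨fun s => indicatorConstLp 2 (measurableSet_Ioc (a := (0:ℝ)) (b := s)) (by simp) 1, ?_⟩
  intro s r hs hr
  rw [L2.real_inner_indicatorConstLp_one_indicatorConstLp_one _ _ (by simp) (by simp),
    Ioc_inter_Ioc]
  simp [hs, hr]

open scoped InnerProductSpace in
lemma aux_linInd (t : ℕ → ℝ) (ht : ∀ k, 0 < t k) (hinj : Function.Injective t)
    (v : ℝ → Lp ℝ 2 (volume : Measure ℝ))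
    (hv : ∀ s r : ℝ, 0 ≤ s → 0 ≤ r → ⟪v s, v r⟫_ℝ = min s r) :
    LinearIndependent ℝ (fun k => v (t k)) := by
  rw [linearIndependent_iff']
  intro S c hc k hk
  obtain ⟨h, h0, hk0, hh⟩ : ∃ h > 0, h < t k ∧ ∀ j ∈ S, j ≠ k → h ≤ |t j - t k| := by
    have : ∀ᶠ h in 𝓝[>] (0:ℝ), h < t k ∧ ∀ j ∈ S, j ≠ k → h ≤ |t j - t k| := by
      refine Filter.Eventually.and ?_ ((Finset.eventually_all S).2 fun j _ => ?_)
      · exact nhdsWithin_le_nhds (eventually_lt_nhds (ht k))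
      · by_cases hjk : j = k
        · simp [hjk]
        · have : 0 < |t j - t k| := abs_pos.2 (sub_ne_zero.2 (hinj.ne hjk))
          filter_upwards [nhdsWithin_le_nhds (eventually_lt_nhds this)] with h hh _ using hh.le
    obtain ⟨h, h1, h2⟩ := (this.and self_mem_nhdsWithin).exists
    exact ⟨h, h2, h1⟩
  have hF : ∀ s : ℝ, 0 ≤ s → ∑ j ∈ S, c j * min s (t j) = 0 := by
    intro s hs
    have := congrArg (fun w => ⟪v s, w⟫_ℝ) hc
    simpa [inner_sum, inner_smul_right, hv s _ hs (ht _).le] using this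
  have h3 : ∑ j ∈ S, c j * (min (t k + h) (t j) + min (t k - h) (t j) - 2 * min (t k) (t j)) = 0 := by
    have e1 := hF (t k + h) (by linarith [ht k])
    have e2 := hF (t k - h) (by linarith [ht k])
    have e3 := hF (t k) (by linarith [ht k])
    calc _ = ∑ j ∈ S, c j * min (t k + h) (t j) + ∑ j ∈ S, c j * min (t k - h) (t j)
        - 2 * ∑ j ∈ S, c j * min (t k) (t j) := by
          rw [Finset.mul_sum, ← Finset.sum_add_distrib, ← Finset.sum_sub_distrib]
          exact Finset.sum_congr rfl fun j _ => by ring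
      _ = 0 := by rw [e1, e2, e3]; ring
  rw [Finset.sum_eq_single_of_mem k hk] at h3
  · rw [min_eq_right (by linarith), min_eq_left (by linarith), min_self] at h3
    have : c k * h = 0 := by linarith
    exact (mul_eq_zero.1 this).resolve_right h0.ne'
  · intro j hj hjk
    have := hh j hj hjk
    rcases le_abs.1 this with h4 | h4
    · rw [min_eq_left (by linarith), min_eq_left (by linarith), min_eq_left (by linarith)]; ring
    · rw [min_eq_right (by linarith), min_eq_right (by linarith), min_eq_right (by linarith)]; ring

open scoped InnerProductSpace in
lemma aux_chol (t : ℕ → ℝ) (ht : ∀ k, 0 < t k) (hinj : Function.Injective t) :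
    ∃ L : ℕ → ℕ → ℝ, (∀ k i, k < i → L k i = 0) ∧
      ∀ n : ℕ, covM t n = (Matrix.of fun j i : Fin n => L j i) * (Matrix.of fun j i : Fin n => L j i)ᵀ
        ∧ (Matrix.of fun j i : Fin n => L j i).det ≠ 0 := by
  obtain ⟨v, hv⟩ := aux_vecs
  have hli := aux_linInd t ht hinj v hv
  set f : ℕ → Lp ℝ 2 (volume : Measure ℝ) := fun k => v (t k) with hf
  set e := InnerProductSpace.gramSchmidtNormed ℝ f with he
  have hon : Orthonormal ℝ e := InnerProductSpace.gramSchmidtNormed_orthonormal hli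
  have hexp : ∀ n, ∀ w ∈ Submodule.span ℝ (e '' Set.Iio n),
      w = ∑ i ∈ Finset.range n, ⟪e i, w⟫_ℝ • e i := by
    intro n w hw
    induction hw using Submodule.span_induction with
    | mem x hx =>
      obtain ⟨i, hi, rfl⟩ := hx
      rw [Finset.sum_eq_single_of_mem i (by simpa using hi)]
      · rw [real_inner_self_eq_norm_sq, hon.1]; simp
      · intro j _ hji
        rw [hon.2 hji, zero_smul]
    | zero => simp
    | add x y _ _ hx hy =>
      simp only [inner_add_right, add_smul, Finset.sum_add_distrib]
      rw [← hx, ← hy]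
    | smul a x _ hx =>
      simp only [inner_smul_right, mul_smul, ← Finset.smul_sum]
      rw [← hx]
  have hmem : ∀ n j, j < n → f j ∈ Submodule.span ℝ (e '' Set.Iio n) := by
    intro n j hj
    rw [he, InnerProductSpace.span_gramSchmidtNormed, InnerProductSpace.span_gramSchmidt_Iio]
    exact Submodule.subset_span ⟨j, hj, rfl⟩
  have hM : ∀ n : ℕ, covM t n = (Matrix.of fun j i : Fin n => ⟪e i, f j⟫_ℝ) *
      (Matrix.of fun j i : Fin n => ⟪e i, f j⟫_ℝ)ᵀ := by
    intro n
    ext j r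
    have : ⟪f j, f r⟫_ℝ = min (t j) (t r) := hv _ _ (ht _).le (ht _).le
    simp only [covM, Matrix.of_apply, Matrix.mul_apply, Matrix.transpose_apply]
    rw [← this]
    conv_lhs => rw [hexp n (f j) (hmem n j j.2)]
    simp only [sum_inner, real_inner_smul_left]
    rw [Finset.sum_range]
  refine ⟨fun k i => ⟪e i, f k⟫_ℝ, ?_, fun n => ⟨hM n, ?_⟩⟩
  · intro k i hki
    simp only [he, InnerProductSpace.gramSchmidtNormed, real_inner_smul_left]
    rw [InnerProductSpace.gramSchmidt_inv_triangular ℝ f hki, mul_zero]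
  · intro h0
    have hd : (covM t n).det = 0 := by rw [hM n, Matrix.det_mul, h0, zero_mul]
    have hg : covM t n = Matrix.gram ℝ (fun j : Fin n => f j) := by
      ext j r
      simp only [covM, Matrix.of_apply, Matrix.gram_apply]
      exact (hv _ _ (ht _).le (ht _).le).symm
    rw [hg] at hd
    exact Matrix.det_gram_ne_zero_iff_linearIndependent.2 (hli.comp _ Fin.val_injective) hd

lemma aux_infinitePi (n : ℕ) (γ : Measure ℝ) [IsProbabilityMeasure γ] :
    (Measure.infinitePi (fun _ : ℕ => γ)).map (fun ξ (i : Fin n) => ξ i) =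
      Measure.pi (fun _ : Fin n => γ) := by
  have hm : Measurable (fun (ξ : ℕ → ℝ) (i : Fin n) => ξ i) := by fun_prop
  symm
  refine Measure.pi_eq fun s hs => ?_
  rw [Measure.map_apply hm (MeasurableSet.univ_pi hs)]
  have : (fun (ξ : ℕ → ℝ) (i : Fin n) => ξ i) ⁻¹' (univ.pi s) =
      Set.pi (Finset.range n : Set ℕ) (fun i => if h : i < n then s ⟨i, h⟩ else univ) := by
    ext ξ
    simp only [mem_preimage, mem_univ_pi, Set.mem_pi, Finset.coe_range, mem_Iio]
    constructor
    · intro h i hi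
      simpa [hi] using h ⟨i, hi⟩
    · intro h i
      simpa using h i i.2
  rw [this, Measure.infinitePi_pi, Finset.prod_range]
  · exact Finset.prod_congr rfl fun i _ => by simp
  · intro i hi
    have hi' : i < n := by simpa using hi
    simpa [hi'] using hs ⟨i, hi'⟩

lemma aux_exists_P (t : ℕ → ℝ) (ht : ∀ k, 0 < t k) (hinj : Function.Injective t) :
    ∃ P : Measure (ℕ → ℝ), IsFiniteMeasure P ∧
      ∀ n : ℕ, P.map (fun ξ (i : Fin n) => ξ i) = gauss n (covM t n) := by
  obtain ⟨L, hL0, hL⟩ := aux_chol t ht hinj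
  have hX : Measurable (fun (ξ : ℕ → ℝ) (k : ℕ) => ∑ i ∈ Finset.range (k+1), L k i * ξ i) := by
    fun_prop
  refine ⟨(Measure.infinitePi (fun _ : ℕ => ProbabilityTheory.gaussianReal 0 1)).map
    (fun ξ k => ∑ i ∈ Finset.range (k+1), L k i * ξ i), inferInstance, fun n => ?_⟩
  obtain ⟨hM, hdet⟩ := hL n
  rw [hM, ← aux_map_gauss n _ hdet, ← aux_infinitePi, Measure.map_map (by fun_prop) hX,
    Measure.map_map _ (by fun_prop)]
  · congr 1
    ext ξ k
    simp only [Function.comp, Matrix.mulVec, dotProduct, Matrix.of_apply]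
    rw [← Finset.sum_range (fun i => L k i * ξ i)]
    refine Finset.sum_subset (Finset.range_subset_range.2 k.2) fun i _ hi => ?_
    rw [hL0 _ _ (by simpa using hi), zero_mul]
  · exact (Continuous.matrix_mulVec continuous_const continuous_id).measurable

def auxJ (t : ℕ → ℝ) (ht : ∀ k, t k ∈ Set.Ioc (0:ℝ) 1) (x : Cz) : ℕ → ℝ :=
  fun k => (x : C(Set.Icc (0:ℝ) 1, ℝ)) ⟨t k, Set.Ioc_subset_Icc_self (ht k)⟩

lemma auxJ_cont (t : ℕ → ℝ) (ht : ∀ k, t k ∈ Set.Ioc (0:ℝ) 1) : Continuous (auxJ t ht) := by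
  refine continuous_pi fun k => ?_
  exact (continuous_eval_const _).comp continuous_subtype_val

lemma auxJ_inj (t : ℕ → ℝ) (ht : ∀ k, t k ∈ Set.Ioc (0:ℝ) 1)
    (htdense : Set.Icc (0:ℝ) 1 ⊆ closure (Set.range t)) : Function.Injective (auxJ t ht) := by
  intro x y hxy
  have hd : DenseRange (fun k => (⟨t k, Set.Ioc_subset_Icc_self (ht k)⟩ : Set.Icc (0:ℝ) 1)) := by
    intro s
    rw [closure_subtype, ← range_comp]
    exact htdense s.2
  apply Subtype.ext
  apply DFunLike.coe_injective
  exact hd.equalizer (ContinuousMap.continuous _) (ContinuousMap.continuous _)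
    (funext fun k => congrFun hxy k)

lemma aux_phi (t : ℕ → ℝ) (ht : ∀ k, t k ∈ Set.Ioc (0:ℝ) 1)
    (P : Measure (ℕ → ℝ)) [IsFiniteMeasure P]
    (hP : ∀ n : ℕ, P.map (fun ξ (i : Fin n) => ξ i) = gauss n (covM t n))
    (K : Set Cz) (hK : IsCompact K) : phi t ht K = P (auxJ t ht '' K) := by
  have hc := auxJ_cont t ht
  have hpc : ∀ n, Continuous (proj t ht n) := fun n =>
    continuous_pi fun i => (continuous_apply (i : ℕ)).comp hc
  have hcl : ∀ n, IsClosed (proj t ht n '' K) := fun n => (hK.image (hpc n)).isClosed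
  have hset : auxJ t ht '' K =
      ⋂ n : ℕ, (fun (ξ : ℕ → ℝ) (i : Fin (n+1)) => ξ i) ⁻¹' (proj t ht (n+1) '' K) := by
    apply Subset.antisymm
    · rintro _ ⟨x, hx, rfl⟩
      exact mem_iInter.2 fun n => ⟨x, hx, rfl⟩
    · intro y hy
      rw [mem_iInter] at hy
      have hclosed : ∀ n, IsClosed {x : Cz | ∀ i < n + 1, auxJ t ht x i = y i} := by
        intro n
        simp only [setOf_forall]
        exact isClosed_iInter fun i => isClosed_iInter fun _ =>
          isClosed_eq ((continuous_apply i).comp hc) continuous_const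
      obtain ⟨x, hx⟩ := IsCompact.nonempty_iInter_of_sequence_nonempty_isCompact_isClosed
        (fun n => K ∩ {x : Cz | ∀ i < n + 1, auxJ t ht x i = y i})
        (fun n x hx => ⟨hx.1, fun i hi => hx.2 i (by omega)⟩)
        (fun n => by
          obtain ⟨x, hx, hxy⟩ := hy n
          exact ⟨x, hx, fun i hi => congrFun hxy ⟨i, hi⟩⟩)
        (hK.inter_right (hclosed 0))
        (fun n => hK.isClosed.inter (hclosed n))
      rw [mem_iInter] at hx
      exact ⟨x, (hx 0).1, funext fun i => (hx i).2 i (by omega)⟩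
  have hmeas : ∀ n : ℕ, Measurable (fun (ξ : ℕ → ℝ) (i : Fin (n+1)) => ξ i) := fun n => by fun_prop
  rw [hset, Antitone.measure_iInter]
  · unfold phi
    refine iInf_congr fun n => ?_
    rw [← hP, Measure.map_apply (hmeas n) (hcl _).measurableSet]
  · refine antitone_nat_of_succ_le fun n ξ => ?_
    rintro ⟨x, hx, hxy⟩
    exact ⟨x, hx, funext fun i => congrFun hxy i.castSucc⟩
  · exact fun n => ((hmeas n) (hcl _).measurableSet).nullMeasurableSet
  · exact ⟨0, measure_ne_top _ _⟩

/-- `μ` is additive on disjoint Borel sets. -/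
theorem stmt8 (t : ℕ → ℝ) (ht : ∀ k, t k ∈ Set.Ioc (0:ℝ) 1)
    (htinj : Function.Injective t)
    (htdense : Set.Icc (0:ℝ) 1 ⊆ closure (Set.range t))
    (A B : Set Cz) (hA : MeasurableSet A) (hB : MeasurableSet B)
    (hdisj : Disjoint A B) :
    mu t ht (A ∪ B) = mu t ht A + mu t ht B := by
  obtain ⟨P, hPf, hP⟩ := aux_exists_P t (fun k => (ht k).1) htinj
  have hclosed : IsClosed {f : C(Set.Icc (0:ℝ) 1, ℝ) | f ⟨0, ⟨le_refl 0, zero_le_one⟩⟩ = 0} :=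
    isClosed_eq (continuous_eval_const _) continuous_const
  haveI : PolishSpace Cz := hclosed.polishSpace
  have hemb : MeasurableEmbedding (auxJ t ht) :=
    (auxJ_cont t ht).measurableEmbedding (auxJ_inj t ht htdense)
  set Q : Measure Cz := P.comap (auxJ t ht) with hQ
  have hQa : ∀ s, Q s = P (auxJ t ht '' s) := fun s => hemb.comap_apply P s
  haveI : IsFiniteMeasure Q := ⟨by rw [hQa]; exact measure_lt_top _ _⟩
  have hmu : ∀ S : Set Cz, MeasurableSet S → mu t ht S = Q S := by
    intro S hS
    rw [hS.measure_eq_iSup_isCompact]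
    unfold mu
    refine iSup_congr fun K => iSup_congr fun _ => iSup_congr fun hK => ?_
    rw [aux_phi t ht P hP K hK, hQa]
  rw [hmu _ (hA.union hB), hmu _ hA, hmu _ hB, measure_union hdisj hB]

end
end

section
/- If A and B are Borel subsets of C with A ⊆ B, then μ(B \ A) = μ(B) − μ(A). -/
open MeasureTheory Matrix Set Filter Topology
open scoped ENNReal

noncomputable section

open ProbabilityTheory InnerProductSpace in
lemma aux_coeff (t : ℕ → ℝ) (ht : ∀ k, t k ∈ Set.Ioc (0:ℝ) 1)
    (htinj : Function.Injective t) :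
    ∃ a : ℕ → ℕ → ℝ, (∀ k j, k < j → a k j = 0) ∧ ∀ n,
      (Matrix.of fun i j : Fin n => a i j) * (Matrix.of fun i j : Fin n => a i j)ᵀ = covM t n ∧
      (Matrix.of fun i j : Fin n => a i j).det ≠ 0 := by
  let F : ℝ → Lp ℝ 2 (volume : Measure ℝ) := fun s =>
    indicatorConstLp 2 (measurableSet_Ioc (a := (0:ℝ)) (b := s)) (by simp) (1:ℝ)
  have hF : ∀ s r : ℝ, 0 ≤ s → 0 ≤ r → inner ℝ (F s) (F r) = min s r := by
    intro s r hs hr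
    have := L2.inner_indicatorConstLp_one_indicatorConstLp_one (𝕜 := ℝ)
      (measurableSet_Ioc (a := (0:ℝ)) (b := s)) (measurableSet_Ioc (a := (0:ℝ)) (b := r))
      (μ := volume) (by simp) (by simp)
    rw [show inner ℝ (F s) (F r) = _ from this, Set.Ioc_inter_Ioc]
    simp [hs, hr]
  let f : ℕ → Lp ℝ 2 (volume : Measure ℝ) := fun k => F (t k)
  have hf : ∀ j k, inner ℝ (f j) (f k) = min (t j) (t k) := fun j k =>
    hF _ _ (ht j).1.le (ht k).1.le
  have hli : LinearIndependent ℝ f := by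
    rw [linearIndependent_iff']
    intro s g hg k hk
    obtain ⟨ε, hε, hεk, hεj⟩ : ∃ ε > 0, ε ≤ t k ∧ ∀ j ∈ s, j ≠ k → ε ≤ |t j - t k| := by
      have : ∀ s : Finset ℕ, ∃ ε > 0, ε ≤ t k ∧ ∀ j ∈ s, j ≠ k → ε ≤ |t j - t k| := by
        intro s
        induction s using Finset.induction_on with
        | empty => exact ⟨t k, (ht k).1, le_rfl, by simp⟩
        | insert i s hi ih =>
          obtain ⟨ε, h1, h2, h3⟩ := ih
          by_cases hik : i = k
          · refine ⟨ε, h1, h2, ?_⟩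
            intro j hj hjk
            rcases Finset.mem_insert.1 hj with rfl | hj
            · exact absurd hik hjk
            · exact h3 j hj hjk
          · refine ⟨min ε |t i - t k|, lt_min h1 ?_, (min_le_left _ _).trans h2, ?_⟩
            · exact abs_pos.2 (sub_ne_zero.2 fun h => hik (htinj h))
            intro j hj hjk
            rcases Finset.mem_insert.1 hj with rfl | hj
            · exact min_le_right _ _
            · exact (min_le_left _ _).trans (h3 j hj hjk)
      exact this s
    let G := (2:ℝ) • F (t k) - F (t k - ε) - F (t k + ε)
    have h0 := (ht k).1
    have hG : ∀ r, 0 ≤ r → inner ℝ G (F r) = 2 * min (t k) r - min (t k - ε) r - min (t k + ε) r := by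
      intro r hr
      simp only [G, inner_sub_left, real_inner_smul_left]
      rw [hF _ _ h0.le hr, hF _ _ (by linarith) hr, hF _ _ (by linarith) hr]
    have h1 : inner ℝ G (∑ i ∈ s, g i • f i) = 0 := by rw [hg, inner_zero_right]
    rw [inner_sum, Finset.sum_eq_single k] at h1
    · rw [real_inner_smul_right, hG _ h0.le] at h1
      rw [min_self, min_eq_left (by linarith), min_eq_right (by linarith)] at h1
      rcases mul_eq_zero.1 h1 with h | h
      · exact h
      · linarith
    · intro j hj hjk
      rw [real_inner_smul_right, hG _ (ht j).1.le]
      have := hεj j hj hjk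
      apply mul_eq_zero_of_right
      rcases le_abs.1 this with h | h
      · rw [min_eq_left (by linarith), min_eq_left (by linarith), min_eq_left (by linarith)]; ring
      · rw [min_eq_right (by linarith), min_eq_right (by linarith), min_eq_right (by linarith)]; ring
    · exact fun h => absurd hk h
  let e := gramSchmidtNormed ℝ f
  have he : Orthonormal ℝ e := gramSchmidtNormed_orthonormal hli
  have key : ∀ n, ∀ x ∈ Submodule.span ℝ (e '' Set.Iic n), ∀ y,
      inner ℝ x y = ∑ j ∈ Finset.range (n+1), inner ℝ (e j) x * inner ℝ (e j) y := by
    intro n x hx y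
    induction hx using Submodule.span_induction with
    | mem x h =>
      obtain ⟨i, hi, rfl⟩ := h
      simp only [Set.mem_Iic] at hi
      simp [orthonormal_iff_ite.1 he, Nat.lt_succ_iff.2 hi]
    | zero => simp
    | add x y _ _ hx hy => simp [inner_add_left, inner_add_right, hx, hy, add_mul, Finset.sum_add_distrib]
    | smul c x _ hx =>
      simp [real_inner_smul_left, real_inner_smul_right, hx, Finset.mul_sum, mul_assoc]
  have hmem : ∀ k, f k ∈ Submodule.span ℝ (e '' Set.Iic k) := by
    intro k
    rw [span_gramSchmidtNormed]
    exact mem_span_gramSchmidt ℝ f le_rfl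
  have htri : ∀ k j, k < j → inner ℝ (e j) (f k) = 0 := by
    intro k j hkj
    simp [e, gramSchmidtNormed, real_inner_smul_left, gramSchmidt_inv_triangular ℝ f hkj]
  have hmul : ∀ n, (Matrix.of fun i j : Fin n => inner ℝ (e j) (f i)) *
      (Matrix.of fun i j : Fin n => inner ℝ (e j) (f i))ᵀ = covM t n := by
    intro n
    ext i k
    simp only [Matrix.mul_apply, Matrix.of_apply, Matrix.transpose_apply, covM]
    rw [← hf, key i _ (hmem i), Fin.sum_univ_eq_sum_range (fun j => inner ℝ (e j) (f i) * inner ℝ (e j) (f k)) n]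
    symm
    apply Finset.sum_subset
    · intro j hj; simp at hj ⊢; omega
    · intro j hj hj'
      simp at hj hj'
      rw [htri _ _ (by omega), zero_mul]
  refine ⟨fun k j => inner ℝ (e j) (f k), htri, fun n => ⟨hmul n, ?_⟩⟩
  have hdet : (covM t n).det ≠ 0 := by
    have : covM t n = Matrix.gram ℝ (fun i : Fin n => f i) := by
      ext i j; simp [covM, Matrix.gram, hf]
    rw [this]
    exact (Matrix.posDef_gram_of_linearIndependent (hli.comp _ Fin.val_injective)).det_pos.ne'
  intro h
  apply hdet
  rw [← hmul n, Matrix.det_mul, h, zero_mul]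

lemma aux_pi_gauss (n : ℕ) :
    Measure.pi (fun _ : Fin n => ProbabilityTheory.gaussianReal 0 1) =
      volume.withDensity fun u : Fin n → ℝ =>
        ENNReal.ofReal (∏ i, ProbabilityTheory.gaussianPDFReal 0 1 (u i)) := by
  apply Measure.pi_eq
  intro s hs
  have hnn : ∀ x : Fin n → ℝ, 0 ≤ ∏ i, ProbabilityTheory.gaussianPDFReal 0 1 (x i) := fun x =>
    Finset.prod_nonneg fun i _ => ProbabilityTheory.gaussianPDFReal_nonneg _ _ _
  have hint : Integrable (ProbabilityTheory.gaussianPDFReal 0 1) := ProbabilityTheory.integrable_gaussianPDFReal 0 1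
  rw [withDensity_apply _ (MeasurableSet.univ_pi hs), volume_pi, Measure.restrict_pi_pi,
    ← ofReal_integral_eq_lintegral_ofReal _ (ae_of_all _ hnn),
    integral_fintype_prod_eq_prod (fun _ => ProbabilityTheory.gaussianPDFReal 0 1),
    ENNReal.ofReal_prod_of_nonneg]
  · refine Finset.prod_congr rfl fun i _ => ?_
    rw [ProbabilityTheory.gaussianReal_apply_eq_integral _ one_ne_zero]
  · intro i _
    exact integral_nonneg fun x => ProbabilityTheory.gaussianPDFReal_nonneg _ _ _
  · exact Integrable.fintype_prod fun i => hint.restrict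

lemma aux_map (n : ℕ) (L : Matrix (Fin n) (Fin n) ℝ) (hL : L.det ≠ 0) :
    (Measure.pi (fun _ : Fin n => ProbabilityTheory.gaussianReal 0 1)).map (Matrix.toLin' L) =
      gauss n (L * Lᵀ) := by
  have hmeas : Measurable (Matrix.toLin' L) :=
    (LinearMap.continuous_of_finiteDimensional (Matrix.toLin' L)).measurable
  have hvol := Real.map_matrix_volume_pi_eq_smul_volume_pi hL
  have hvol2 : (volume : Measure (Fin n → ℝ)) =
      ENNReal.ofReal |L.det| • Measure.map (Matrix.toLin' L) volume := by
    rw [hvol, smul_smul, ← ENNReal.ofReal_mul (abs_nonneg _), ← abs_mul, mul_inv_cancel₀ hL]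
    simp
  ext S hS
  rw [aux_pi_gauss, gauss, Measure.map_apply hmeas hS, withDensity_apply _ (hmeas hS),
    withDensity_apply _ hS]
  conv_rhs => rw [hvol2]
  have hcont : Continuous fun u : Fin n → ℝ => (u ⬝ᵥ (L * Lᵀ)⁻¹.mulVec u) := by
    fun_prop
  rw [Measure.restrict_smul, lintegral_smul_measure, setLIntegral_map hS _ hmeas, smul_eq_mul,
    ← lintegral_const_mul]
  rotate_left
  · fun_prop
  · fun_prop
  apply lintegral_congr
  intro x
  rw [← ENNReal.ofReal_mul (abs_nonneg _)]
  congr 1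
  have hq : (Matrix.toLin' L x) ⬝ᵥ (L * Lᵀ)⁻¹.mulVec (Matrix.toLin' L x) = ∑ i, x i ^ 2 := by
    have hu : IsUnit L.det := isUnit_iff_ne_zero.2 hL
    have hut : IsUnit Lᵀ.det := by rwa [Matrix.det_transpose]
    rw [Matrix.toLin'_apply, Matrix.mulVec_mulVec, Matrix.mul_inv_rev, mul_assoc,
      Matrix.nonsing_inv_mul _ hu, mul_one, Matrix.dotProduct_mulVec, ← Matrix.vecMul_transpose,
      Matrix.vecMul_vecMul, Matrix.mul_nonsing_inv _ hut, Matrix.vecMul_one]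
    simp [dotProduct, sq]
  rw [hq, Matrix.det_mul, Matrix.det_transpose]
  simp only [ProbabilityTheory.gaussianPDFReal, NNReal.coe_one, mul_one, sub_zero]
  rw [Finset.prod_mul_distrib, ← Real.exp_sum, Finset.prod_const, Finset.card_univ, Fintype.card_fin,
    ← mul_assoc]
  congr 1
  · have hp : (0:ℝ) < 2 * Real.pi := by positivity
    rw [show (-(1:ℝ)/2) = -(1/2) by ring, Real.rpow_neg (mul_nonneg (by positivity) (mul_self_nonneg _)), ← Real.sqrt_eq_rpow,
      Real.sqrt_mul (pow_nonneg hp.le n), Real.sqrt_mul_self_eq_abs, mul_inv, mul_left_comm,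
      mul_inv_cancel₀ (abs_pos.2 hL).ne', mul_one, inv_pow]
    congr 1
    rw [eq_comm, Real.sqrt_eq_iff_mul_self_eq (by positivity) (by positivity), ← mul_pow,
      Real.mul_self_sqrt hp.le]
  · rw [← Finset.sum_div, Finset.sum_neg_distrib]

lemma aux_proj_pi (n : ℕ) :
    (Measure.infinitePi (fun _ : ℕ => ProbabilityTheory.gaussianReal 0 1)).map
      (fun (x : ℕ → ℝ) (i : Fin n) => x i) =
    Measure.pi (fun _ : Fin n => ProbabilityTheory.gaussianReal 0 1) := by
  symm
  apply Measure.pi_eq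
  intro s hs
  rw [Measure.map_apply (by fun_prop) (MeasurableSet.univ_pi hs)]
  let T : ℕ → Set ℝ := fun i => if h : i < n then s ⟨i, h⟩ else univ
  have hT : ∀ i : Fin n, T i = s i := fun i => by simp [T]
  have : (fun (x : ℕ → ℝ) (i : Fin n) => x i) ⁻¹' (Set.univ.pi s) = Set.pi (Finset.range n) T := by
    ext x
    simp only [Set.mem_preimage, Set.mem_pi, Set.mem_univ, true_imp_iff, Finset.coe_range, Set.mem_Iio]
    constructor
    · intro h i hi
      have := h ⟨i, hi⟩
      rw [← hT] at this
      exact this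
    · intro h i
      rw [← hT]
      exact h i i.2
  rw [this, Measure.infinitePi_pi]
  · rw [← Fin.prod_univ_eq_prod_range (fun i => ProbabilityTheory.gaussianReal 0 1 (T i)) n]
    simp [hT]
  · intro i hi
    simp only [Finset.mem_range] at hi
    simp [T, hi, hs]

lemma aux_measure (t : ℕ → ℝ) (ht : ∀ k, t k ∈ Set.Ioc (0:ℝ) 1)
    (htinj : Function.Injective t) :
    ∃ P : Measure (ℕ → ℝ), IsFiniteMeasure P ∧
      ∀ n, P.map (fun (x : ℕ → ℝ) (i : Fin n) => x i) = gauss n (covM t n) := by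
  obtain ⟨a, ha, hn⟩ := aux_coeff t ht htinj
  let X : (ℕ → ℝ) → (ℕ → ℝ) := fun ξ k => ∑ j ∈ Finset.range (k+1), a k j * ξ j
  have hX : Measurable X := by
    apply measurable_pi_lambda; intro k; fun_prop
  refine ⟨(Measure.infinitePi (fun _ : ℕ => ProbabilityTheory.gaussianReal 0 1)).map X,
    inferInstance, fun n => ?_⟩
  rw [← (hn n).1, ← aux_map n _ (hn n).2, ← aux_proj_pi, Measure.map_map (by fun_prop) hX,
    Measure.map_map _ (by fun_prop)]
  · congr 1
    ext ξ i
    simp only [Function.comp, X, Matrix.toLin'_apply, Matrix.mulVec, dotProduct, Matrix.of_apply]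
    rw [Fin.sum_univ_eq_sum_range (fun j => a i j * ξ j) n]
    apply Finset.sum_subset
    · intro j hj; simp at hj ⊢; omega
    · intro j hj hj'
      simp at hj hj'
      rw [ha _ _ (by omega), zero_mul]
  · exact (LinearMap.continuous_of_finiteDimensional _).measurable

theorem stmt9 (t : ℕ → ℝ) (ht : ∀ k, t k ∈ Set.Ioc (0:ℝ) 1)
    (htinj : Function.Injective t)
    (htdense : Set.Icc (0:ℝ) 1 ⊆ closure (Set.range t))
    (A B : Set Cz) (hA : MeasurableSet A) (hB : MeasurableSet B)
    (hAB : A ⊆ B) :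
    mu t ht (B \ A) = mu t ht B - mu t ht A := by
  obtain ⟨P, hPfin, hP⟩ := aux_measure t ht htinj
  let τ : ℕ → Set.Icc (0:ℝ) 1 := fun k => ⟨t k, Set.Ioc_subset_Icc_self (ht k)⟩
  have hτ : DenseRange τ := by
    intro x
    rw [Metric.mem_closure_range_iff]
    intro ε hε
    obtain ⟨k, hk⟩ := Metric.mem_closure_range_iff.1 (htdense x.2) ε hε
    exact ⟨k, hk⟩
  let ι : Cz → (ℕ → ℝ) := fun x k => (x : C(Set.Icc (0:ℝ) 1, ℝ)) (τ k)
  have hιc : Continuous ι := by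
    apply continuous_pi
    intro k
    exact (continuous_eval_const (τ k)).comp continuous_subtype_val
  have hιi : Function.Injective ι := by
    intro x y h
    apply Subtype.ext
    apply DFunLike.coe_injective
    exact hτ.equalizer (map_continuous _) (map_continuous _) h
  have hclosed : IsClosed {f : C(Set.Icc (0:ℝ) 1, ℝ) | f ⟨0, ⟨le_refl 0, zero_le_one⟩⟩ = 0} :=
    isClosed_eq (continuous_eval_const _) continuous_const
  have : PolishSpace Cz := hclosed.polishSpace
  have hemb : MeasurableEmbedding ι := hιc.measurableEmbedding hιi
  let W : Measure Cz := P.comap ι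
  have : IsFiniteMeasure W := by
    constructor
    rw [hemb.comap_apply]
    exact measure_lt_top _ _
  have hphi : ∀ K : Set Cz, IsCompact K → phi t ht K = W K := by
    intro K hK
    have hKc : IsCompact (ι '' K) := hK.image hιc
    let r : ∀ n : ℕ, (ℕ → ℝ) → (Fin n → ℝ) := fun n x i => x i
    have hr : ∀ n, Continuous (r n) := fun n => by fun_prop
    have hproj : ∀ n, proj t ht n '' K = r n '' (ι '' K) := by
      intro n; rw [Set.image_image]; rfl
    have hms : ∀ n, MeasurableSet (r n ⁻¹' (r n '' (ι '' K))) := fun n =>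
      ((hKc.image (hr n)).isClosed.preimage (hr n)).measurableSet
    have hinter : ι '' K = ⋂ n : ℕ, r (n+1) ⁻¹' (r (n+1) '' (ι '' K)) := by
      apply subset_antisymm
      · exact subset_iInter fun n => subset_preimage_image _ _
      · intro y hy
        simp only [Set.mem_iInter, Set.mem_preimage] at hy
        choose z hz hzy using hy
        refine hKc.isClosed.mem_of_tendsto (f := z) (b := atTop) ?_ (Eventually.of_forall hz)
        rw [tendsto_pi_nhds]
        intro i
        apply tendsto_const_nhds.congr'
        filter_upwards [eventually_ge_atTop i] with n hn
        exact (congrFun (hzy n) ⟨i, by omega⟩).symm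
    have hanti : Antitone fun n : ℕ => r (n+1) ⁻¹' (r (n+1) '' (ι '' K)) := by
      intro m n hmn y hy
      obtain ⟨z, hz, hzy⟩ := hy
      refine ⟨z, hz, ?_⟩
      ext i
      exact congrFun hzy ⟨i, by omega⟩
    rw [hemb.comap_apply, hinter, hanti.measure_iInter (fun n => (hms (n+1)).nullMeasurableSet)
      ⟨0, measure_ne_top _ _⟩]
    unfold phi
    congr 1
    ext n
    rw [← hP, hproj, Measure.map_apply (hr (n+1)).measurable (hKc.image (hr _)).measurableSet]
  have hmu : ∀ S : Set Cz, MeasurableSet S → mu t ht S = W S := by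
    intro S hS
    rw [hS.measure_eq_iSup_isCompact W]
    unfold mu
    refine iSup_congr fun K => iSup_congr fun _ => iSup_congr fun hK => hphi K hK
  rw [hmu _ (hB.diff hA), hmu _ hB, hmu _ hA,
    measure_sdiff hAB hA.nullMeasurableSet (measure_ne_top _ _)]

end
end

section
/- Let (A_m)_{m≥1} be a nondecreasing sequence of Borel subsets of C and let K be a compact subset of C with ⋃_{m=1}^∞ A_m = K. Then μ(A_m) converges to μ(K) = φ(K) as m → ∞. -/
open MeasureTheory Matrix Set Filter Topology
open scoped ENNReal

noncomputable section

open InnerProductSpace in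
lemma chol_aux {E : Type*} [NormedAddCommGroup E] [InnerProductSpace ℝ E] (f : ℕ → E)
    (hf : LinearIndependent ℝ f) : ∃ L : ℕ → ℕ → ℝ, (∀ k j, k < j → L k j = 0) ∧
      (∀ k, L k k ≠ 0) ∧
      ∀ n k r, k < n → r < n → ∑ j ∈ Finset.range n, L k j * L r j = inner ℝ (f k) (f r) := by
  have hon := gramSchmidtNormed_orthonormal hf
  set e := gramSchmidtNormed ℝ f with he
  have htri : ∀ k j, k < j → inner ℝ (e j) (f k) = 0 := by
    intro k j h
    rw [he, gramSchmidtNormed, inner_smul_left, gramSchmidt_inv_triangular ℝ f h, mul_zero]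
  have hsum : ∀ n k, k < n → ∑ j ∈ Finset.range n, inner ℝ (e j) (f k) • e j = f k := by
    intro n k hk
    have hmem : f k ∈ Submodule.span ℝ (e '' (Finset.range n : Set ℕ)) := by
      have h1 := mem_span_gramSchmidt ℝ f (le_refl k)
      rw [← span_gramSchmidtNormed] at h1
      refine Submodule.span_mono (Set.image_mono ?_) h1
      intro j hj
      simp only [Set.mem_Iic] at hj
      simp only [Finset.coe_range, Set.mem_Iio]
      omega
    rw [Submodule.mem_span_image_finset_iff_exists_fun] at hmem
    obtain ⟨c', hc'⟩ := hmem
    obtain ⟨c, hc⟩ : ∃ c : ℕ → ℝ, ∑ i ∈ Finset.range n, c i • e i = f k := by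
      refine ⟨fun j => if h : j ∈ Finset.range n then c' ⟨j, h⟩ else 0, ?_⟩
      rw [← hc', ← Finset.sum_coe_sort]
      refine Finset.sum_congr rfl fun i _ => ?_
      simp only [dif_pos i.2]
    refine Eq.trans (Finset.sum_congr rfl fun j hj => ?_) hc
    rw [← hc, hon.inner_right_sum c hj]
  refine ⟨fun k j => inner ℝ (e j) (f k), htri, ?_, ?_⟩
  · intro k h0
    replace h0 : inner ℝ (e k) (f k) = 0 := h0
    have h1 := hsum (k+1) k (Nat.lt_succ_self k)
    rw [Finset.sum_range_succ, h0, zero_smul, add_zero] at h1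
    have hmem : f k ∈ Submodule.span ℝ (f '' Set.Iio k) := by
      rw [← span_gramSchmidt_Iio ℝ, ← span_gramSchmidtNormed, ← h1]
      refine Submodule.sum_mem _ fun j hj => Submodule.smul_mem _ _ (Submodule.subset_span ?_)
      exact ⟨j, by simpa using hj, rfl⟩
    exact hf.notMem_span_image (by simp) hmem
  · intro n k r hk hr
    have := hon.inner_sum (fun j => inner ℝ (e j) (f k)) (fun j => inner ℝ (e j) (f r))
      (Finset.range n)
    rw [hsum n k hk, hsum n r hr] at this
    simpa using this.symm

lemma exists_chol (t : ℕ → ℝ) (ht : ∀ k, t k ∈ Set.Ioc (0:ℝ) 1)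
    (htinj : Function.Injective t) : ∃ L : ℕ → ℕ → ℝ, (∀ k j, k < j → L k j = 0) ∧
      (∀ k, L k k ≠ 0) ∧
      ∀ n k r, k < n → r < n → ∑ j ∈ Finset.range n, L k j * L r j = min (t k) (t r) := by
  let g : ℝ → Lp ℝ 2 (volume : Measure ℝ) := fun s =>
    indicatorConstLp 2 (measurableSet_Ioc : MeasurableSet (Set.Ioc (0:ℝ) s)) (by simp) (1:ℝ)
  have hg : ∀ s r, 0 ≤ s → 0 ≤ r → inner ℝ (g s) (g r) = min s r := by
    intro s r hs hr
    have := L2.real_inner_indicatorConstLp_one_indicatorConstLp_one (μ := (volume : Measure ℝ))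
      (measurableSet_Ioc : MeasurableSet (Set.Ioc (0:ℝ) s))
      (measurableSet_Ioc : MeasurableSet (Set.Ioc (0:ℝ) r)) (by simp) (by simp)
    rw [this, Set.Ioc_inter_Ioc]
    simp [hs, hr]
  have hli : LinearIndependent ℝ (fun k => g (t k)) := by
    rw [linearIndependent_iff']
    intro s c hc k hk
    obtain ⟨h, hh0, hhk, hh⟩ : ∃ h > 0, h ≤ t k ∧ ∀ j ∈ s, j ≠ k → h ≤ |t j - t k| := by
      by_cases hne : (s.erase k).Nonempty
      · obtain ⟨j, hj, hm⟩ := Finset.exists_min_image (s.erase k) (fun j => |t j - t k|) hne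
        refine ⟨min (t k) |t j - t k|, lt_min (ht k).1 ?_, min_le_left _ _, ?_⟩
        · rw [abs_pos, sub_ne_zero]
          exact fun h => (Finset.ne_of_mem_erase hj) (htinj h)
        · intro i hi hik
          exact (min_le_right _ _).trans (hm i (Finset.mem_erase.2 ⟨hik, hi⟩))
      · refine ⟨t k, (ht k).1, le_rfl, fun j hj hjk => ?_⟩
        exact absurd ⟨j, Finset.mem_erase.2 ⟨hjk, hj⟩⟩ hne
    have hin : inner ℝ (g (t k + h) + g (t k - h) - (2:ℝ) • g (t k)) (∑ i ∈ s, c i • g (t i)) = 0 := by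
      rw [hc, inner_zero_right]
    rw [inner_sum] at hin
    have hterm : ∀ i ∈ s, inner ℝ (g (t k + h) + g (t k - h) - (2:ℝ) • g (t k)) (c i • g (t i))
        = if i = k then c i * (-h) else 0 := by
      intro i hi
      have hk0 := (ht k).1
      rw [inner_smul_right, inner_sub_left, inner_add_left, inner_smul_left,
        hg _ _ (by linarith) (ht i).1.le, hg _ _ (by linarith) (ht i).1.le,
        hg _ _ (by linarith) (ht i).1.le]
      simp only [conj_trivial]
      split_ifs with hik
      · subst hik
        rw [min_eq_right (by linarith), min_eq_left (by linarith), min_self]; ring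
      · have h3 := hh i hi hik
        rcases le_abs.1 h3 with h4 | h4
        · rw [min_eq_left (by linarith), min_eq_left (by linarith), min_eq_left (by linarith)]; ring
        · rw [min_eq_right (by linarith), min_eq_right (by linarith), min_eq_right (by linarith)]
          ring
    rw [Finset.sum_congr rfl hterm, Finset.sum_ite_eq' s k, if_pos hk] at hin
    rcases mul_eq_zero.1 hin with h1 | h1
    · exact h1
    · linarith
  obtain ⟨L, h1, h2, h3⟩ := chol_aux _ hli
  exact ⟨L, h1, h2, fun n k r hk hr => (h3 n k r hk hr).trans (hg _ _ (ht k).1.le (ht r).1.le)⟩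

lemma pi_gauss (n : ℕ) : Measure.pi (fun _ : Fin n => ProbabilityTheory.gaussianReal 0 1) =
    volume.withDensity fun z : Fin n → ℝ =>
      ENNReal.ofReal (∏ i, ProbabilityTheory.gaussianPDFReal 0 1 (z i)) := by
  refine Measure.pi_eq fun s hs => ?_
  have hint := fun i => ((ProbabilityTheory.integrable_gaussianPDFReal 0 1).restrict (s := s i))
  rw [withDensity_apply _ (MeasurableSet.univ_pi hs), volume_pi, Measure.restrict_pi_pi,
    ← ofReal_integral_eq_lintegral_ofReal (Integrable.fintype_prod hint)
      (ae_of_all _ fun z => Finset.prod_nonneg fun i _ => ProbabilityTheory.gaussianPDFReal_nonneg _ _ _),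
    integral_fintype_prod_eq_prod (f := fun _ => ProbabilityTheory.gaussianPDFReal 0 1),
    ENNReal.ofReal_prod_of_nonneg
      fun i _ => integral_nonneg fun z => ProbabilityTheory.gaussianPDFReal_nonneg _ _ _]
  refine Finset.prod_congr rfl fun i _ => ?_
  rw [ProbabilityTheory.gaussianReal_apply_eq_integral _ one_ne_zero]

lemma gauss_eq_map (n : ℕ) (L M : Matrix (Fin n) (Fin n) ℝ) (hL : L.det ≠ 0) (hM : M = L * Lᵀ) :
    gauss n M = (Measure.pi (fun _ : Fin n => ProbabilityTheory.gaussianReal 0 1)).map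
      (fun z => L.mulVec z) := by
  have hmeas : Measurable (fun z : Fin n → ℝ => L.mulVec z) :=
    (Continuous.matrix_mulVec continuous_const continuous_id).measurable
  have hU : IsUnit L.det := isUnit_iff_ne_zero.2 hL
  have hmap := Real.map_matrix_volume_pi_eq_smul_volume_pi hL
  have hvol : (volume : Measure (Fin n → ℝ)) =
      ENNReal.ofReal |L.det| • Measure.map (fun z => L.mulVec z) volume := by
    have : (Matrix.toLin' L : (Fin n → ℝ) → _) = fun z => L.mulVec z := by
      ext z; simp
    rw [← this, hmap, smul_smul, ← ENNReal.ofReal_mul (abs_nonneg _), ← abs_mul,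
      mul_inv_cancel₀ hL]
    simp
  ext s hs
  have hgm : Measurable fun u : Fin n → ℝ =>
    ENNReal.ofReal ((((2 * Real.pi) ^ n * M.det) ^ (-(1:ℝ)/2 : ℝ)) *
      Real.exp (-(u ⬝ᵥ M⁻¹.mulVec u) / 2)) := by
    refine (Continuous.measurable ?_).ennreal_ofReal
    have : Continuous fun u : Fin n → ℝ => u ⬝ᵥ M⁻¹.mulVec u :=
      Continuous.dotProduct continuous_id (Continuous.matrix_mulVec continuous_const continuous_id)
    fun_prop
  rw [Measure.map_apply hmeas hs, pi_gauss, withDensity_apply _ (hmeas hs), gauss,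
    withDensity_apply _ hs, hvol, Measure.restrict_smul, lintegral_smul_measure,
    setLIntegral_map hs hgm hmeas, ← hvol, smul_eq_mul]
  refine (lintegral_const_mul _ (hgm.comp hmeas)).symm.trans ?_
  refine lintegral_congr fun z => ?_
  simp only [Function.comp_apply]
  rw [← ENNReal.ofReal_mul (abs_nonneg _)]
  congr 1
  have hq : L.mulVec z ⬝ᵥ M⁻¹.mulVec (L.mulVec z) = ∑ i, z i ^ 2 := by
    rw [hM, Matrix.mul_inv_rev, Matrix.mulVec_mulVec, Matrix.mul_assoc, Matrix.nonsing_inv_mul _ hU,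
      Matrix.mul_one, ← Matrix.transpose_nonsing_inv, Matrix.mulVec_transpose,
      dotProduct_comm, ← Matrix.dotProduct_mulVec, Matrix.mulVec_mulVec,
      Matrix.nonsing_inv_mul _ hU, Matrix.one_mulVec]
    simp [dotProduct, sq]
  have hd : M.det = |L.det| ^ 2 := by rw [hM, Matrix.det_mul, Matrix.det_transpose, sq_abs, sq]
  have hpos : 0 < |L.det| := abs_pos.2 hL
  have hpow : ((2 * Real.pi) ^ n * M.det) ^ (-(1:ℝ)/2 : ℝ) = (Real.sqrt (2 * Real.pi))⁻¹ ^ n * |L.det|⁻¹ := by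
    have h2 : (2 * Real.pi) ^ n * M.det = ((Real.sqrt (2 * Real.pi)) ^ n * |L.det|) ^ 2 := by
      rw [hd, mul_pow (Real.sqrt (2 * Real.pi) ^ n), ← pow_mul, mul_comm n 2, pow_mul, Real.sq_sqrt (by positivity)]
    rw [h2, neg_div, Real.rpow_neg (by positivity), ← Real.sqrt_eq_rpow, Real.sqrt_sq (by positivity),
      mul_inv, inv_pow]
  rw [hq, hpow]
  simp only [ProbabilityTheory.gaussianPDFReal, Finset.prod_mul_distrib, ← Real.exp_sum]
  simp only [Finset.prod_const, Finset.card_univ, Fintype.card_fin, NNReal.coe_one, mul_one, sub_zero]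
  rw [← Finset.sum_div, Finset.sum_neg_distrib]
  field_simp

lemma infinitePi_map_fin (n : ℕ) :
    (Measure.infinitePi (fun _ : ℕ => ProbabilityTheory.gaussianReal 0 1)).map
      (fun z (i : Fin n) => z i) =
    Measure.pi (fun _ : Fin n => ProbabilityTheory.gaussianReal 0 1) := by
  refine (Measure.pi_eq fun s hs => ?_).symm
  rw [Measure.map_apply (by fun_prop) (MeasurableSet.univ_pi hs)]
  have : (fun (z : ℕ → ℝ) (i : Fin n) => z i) ⁻¹' (Set.univ.pi s) =
      Set.pi (Finset.range n : Set ℕ) (fun k => if h : k < n then s ⟨k, h⟩ else Set.univ) := by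
    ext z
    simp only [Set.mem_preimage, Set.mem_pi, Set.mem_univ, forall_true_left, Finset.coe_range,
      Set.mem_Iio]
    constructor
    · intro h k hk
      simpa [hk] using h ⟨k, hk⟩
    · intro h i
      simpa [i.2] using h i i.2
  rw [this, Measure.infinitePi_pi, Finset.prod_range]
  · simp
  · intro k hk
    have hk : k < n := by simpa using hk
    simp only [hk, dif_pos]
    exact hs _

lemma exists_limit (t : ℕ → ℝ) (ht : ∀ k, t k ∈ Set.Ioc (0:ℝ) 1)
    (htinj : Function.Injective t) : ∃ P : Measure (ℕ → ℝ), IsProbabilityMeasure P ∧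
      ∀ n, P.map (fun u (i : Fin n) => u i) = gauss n (covM t n) := by
  obtain ⟨L, hL0, hLd, hL⟩ := exists_chol t ht htinj
  let X : (ℕ → ℝ) → (ℕ → ℝ) := fun z k => ∑ j ∈ Finset.range (k+1), L k j * z j
  have hX : Measurable X := by
    refine measurable_pi_lambda _ fun k => ?_
    exact Finset.measurable_sum _ fun j _ => (measurable_pi_apply j).const_mul _
  refine ⟨(Measure.infinitePi (fun _ : ℕ => ProbabilityTheory.gaussianReal 0 1)).map X,
    Measure.isProbabilityMeasure_map hX.aemeasurable, fun n => ?_⟩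
  let Ln : Matrix (Fin n) (Fin n) ℝ := Matrix.of fun k j => L k j
  have hdet : Ln.det ≠ 0 := by
    rw [Matrix.det_of_lowerTriangular]
    · exact Finset.prod_ne_zero_iff.2 fun i _ => hLd i
    · intro i j hij
      exact hL0 i j (by simpa using hij)
  have hM : covM t n = Ln * Lnᵀ := by
    ext i j
    rw [Matrix.mul_apply]
    simp only [covM, Matrix.of_apply, Ln, Matrix.transpose_apply]
    rw [← hL n i j i.2 j.2, Finset.sum_range]
  have hmeas : Measurable (fun z : Fin n → ℝ => Ln.mulVec z) :=
    (Continuous.matrix_mulVec continuous_const continuous_id).measurable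
  rw [gauss_eq_map n Ln _ hdet hM, ← infinitePi_map_fin, Measure.map_map hmeas (by fun_prop),
    Measure.map_map (by fun_prop) hX]
  congr 1
  ext z i
  simp only [Function.comp_apply, X, Matrix.mulVec, dotProduct, Ln, Matrix.of_apply]
  rw [← Finset.sum_range (fun j => L i j * z j)]
  refine Finset.sum_subset (fun j hj => ?_) fun j _ hj => ?_
  · have := i.2
    simp only [Finset.mem_range] at hj ⊢
    omega
  · rw [hL0 i j (by simp only [Finset.mem_range] at hj; omega), zero_mul]

/-- evaluation along the whole sequence -/
def evalSeq (t : ℕ → ℝ) (ht : ∀ k, t k ∈ Set.Ioc (0:ℝ) 1) (x : Cz) : ℕ → ℝ :=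
  fun k => (x : C(Set.Icc (0:ℝ) 1, ℝ)) ⟨t k, Set.Ioc_subset_Icc_self (ht k)⟩

lemma evalSeq_continuous (t : ℕ → ℝ) (ht : ∀ k, t k ∈ Set.Ioc (0:ℝ) 1) :
    Continuous (evalSeq t ht) :=
  continuous_pi fun k => (continuous_eval_const _).comp continuous_subtype_val

lemma evalSeq_injective (t : ℕ → ℝ) (ht : ∀ k, t k ∈ Set.Ioc (0:ℝ) 1)
    (htdense : Set.Icc (0:ℝ) 1 ⊆ closure (Set.range t)) :
    Function.Injective (evalSeq t ht) := by
  intro x y hxy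
  let q : ℕ → Set.Icc (0:ℝ) 1 := fun k => ⟨t k, Set.Ioc_subset_Icc_self (ht k)⟩
  have hq : DenseRange q := by
    intro p
    rw [closure_subtype, ← Set.range_comp]
    exact htdense p.2
  refine Subtype.ext (ContinuousMap.coe_injective ?_)
  refine hq.equalizer x.1.continuous y.1.continuous ?_
  ext k
  exact congrFun hxy k

instance : PolishSpace Cz := by
  refine IsClosed.polishSpace (s := {f : C(Set.Icc (0:ℝ) 1, ℝ) | f ⟨0, ⟨le_refl 0, zero_le_one⟩⟩ = 0}) ?_
  exact isClosed_eq (continuous_eval_const _) continuous_const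

lemma phi_eq (t : ℕ → ℝ) (ht : ∀ k, t k ∈ Set.Ioc (0:ℝ) 1) (P : Measure (ℕ → ℝ))
    [IsProbabilityMeasure P] (hP : ∀ n, P.map (fun u (i : Fin n) => u i) = gauss n (covM t n))
    (K : Set Cz) (hK : IsCompact K) : phi t ht K = P (evalSeq t ht '' K) := by
  have hcl : IsClosed (evalSeq t ht '' K) := (hK.image (evalSeq_continuous t ht)).isClosed
  let S : ℕ → Set (ℕ → ℝ) := fun n => (fun u (i : Fin (n+1)) => u i) ⁻¹' (proj t ht (n+1) '' K)
  have hSm : ∀ n, MeasurableSet (proj t ht (n+1) '' K) := by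
    intro n
    refine (hK.image ?_).isClosed.measurableSet
    exact continuous_pi fun k => (continuous_eval_const _).comp continuous_subtype_val
  have hmeas : ∀ n, Measurable (fun (u : ℕ → ℝ) (i : Fin (n+1)) => u i) := fun n => by fun_prop
  have hanti : Antitone S := by
    rintro m n hmn u ⟨x, hx, hxu⟩
    refine ⟨x, hx, ?_⟩
    ext i
    exact congrFun hxu ⟨i, by omega⟩
  have hint : ⋂ n, S n = evalSeq t ht '' K := by
    refine Set.Subset.antisymm ?_ ?_
    · intro u hu
      have hu' : ∀ n, ∃ x ∈ K, proj t ht (n+1) x = fun i : Fin (n+1) => u i :=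
        fun n => Set.mem_iInter.1 hu n
      choose x hxK hx using hu'
      refine hcl.mem_of_tendsto (f := fun n => evalSeq t ht (x n)) (b := atTop) ?_
        (Eventually.of_forall fun n => ⟨x n, hxK n, rfl⟩)
      rw [tendsto_pi_nhds]
      intro k
      refine tendsto_const_nhds.congr' ?_
      filter_upwards [eventually_ge_atTop k] with n hn
      exact (congrFun (hx n) ⟨k, by omega⟩).symm
    · rintro _ ⟨x, hx, rfl⟩
      exact Set.mem_iInter.2 fun n => ⟨x, hx, rfl⟩
  rw [← hint, hanti.measure_iInter (fun n => ((hmeas n) (hSm n)).nullMeasurableSet)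
    ⟨0, measure_ne_top _ _⟩, phi]
  refine iInf_congr fun n => ?_
  rw [← hP, Measure.map_apply (hmeas n) (hSm n)]

/-- if Borel sets `A_m` increase with union the compact set `K`,
then `μ(A_m) → μ(K) = φ(K)`. -/
theorem stmt12 (t : ℕ → ℝ) (ht : ∀ k, t k ∈ Set.Ioc (0:ℝ) 1)
    (htinj : Function.Injective t)
    (htdense : Set.Icc (0:ℝ) 1 ⊆ closure (Set.range t))
    (A : ℕ → Set Cz) (hA : ∀ m, MeasurableSet (A m)) (hmono : Monotone A)
    (K : Set Cz) (hK : IsCompact K) (hU : (⋃ m, A m) = K) :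
    Tendsto (fun m => mu t ht (A m)) atTop (𝓝 (mu t ht K)) ∧
      mu t ht K = phi t ht K := by
  obtain ⟨P, hPp, hP⟩ := exists_limit t ht htinj
  have hemb : MeasurableEmbedding (evalSeq t ht) :=
    (evalSeq_continuous t ht).measurableEmbedding (evalSeq_injective t ht htdense)
  let Q : Measure Cz := P.comap (evalSeq t ht)
  have hQ : ∀ B, Q B = P (evalSeq t ht '' B) := fun B => hemb.comap_apply P B
  have hQf : IsFiniteMeasure Q := ⟨by rw [hQ]; exact measure_lt_top _ _⟩
  have hphi : ∀ B, IsCompact B → phi t ht B = Q B := fun B hB => by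
    rw [hQ, phi_eq t ht P hP B hB]
  have hmu : ∀ B, MeasurableSet B → mu t ht B = Q B := by
    intro B hB
    rw [hB.measure_eq_iSup_isCompact_of_ne_top (measure_ne_top Q B), mu]
    exact iSup_congr fun K => iSup_congr fun _ => iSup_congr fun hK => hphi K hK
  have hKm := hK.isClosed.measurableSet
  refine ⟨?_, by rw [hmu K hKm, hphi K hK]⟩
  rw [hmu K hKm, ← hU]
  simp_rw [hmu _ (hA _)]
  exact tendsto_measure_iUnion_atTop hmono

end
end

section
/- The supremum of φ(K) over all compact subsets K of C equals 1; that is, μ(C) = 1. -/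
open MeasureTheory Matrix Set Filter Topology
open scoped ENNReal

noncomputable section

/-- ratio -/
noncomputable def rr : ℝ := (1/2:ℝ) ^ (1/8:ℝ)

lemma rr_pos : 0 < rr := by unfold rr; positivity
lemma rr_pow8 : rr ^ 8 = 1/2 := by
  unfold rr
  rw [← Real.rpow_natCast, ← Real.rpow_mul (by norm_num)]
  norm_num
lemma rr_le : rr ≤ 20/21 := by
  by_contra h
  push Not at h
  have := pow_lt_pow_left₀ h (by norm_num) (n := 8) (by norm_num)
  rw [rr_pow8] at this
  norm_num at this
lemma half_le_rr : 1/2 ≤ rr := by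
  by_contra h
  push Not at h
  have := pow_lt_pow_left₀ h rr_pos.le (n := 8) (by norm_num)
  rw [rr_pow8] at this
  norm_num at this
lemma rr_pow (k : ℕ) : rr ^ k = ((1/2:ℝ)^k) ^ (1/8:ℝ) := by
  unfold rr
  rw [← Real.rpow_natCast, ← Real.rpow_natCast, ← Real.rpow_mul (by norm_num), ← Real.rpow_mul (by norm_num), mul_comm]

/-- dyadic approximation -/
noncomputable def dy (k : ℕ) (s : ℝ) : ℝ := (⌊2^k * s⌋₊ : ℝ) / 2^k

lemma chain_step (f : ℝ → ℝ) (R : ℝ) (m : ℕ) (hR : 0 ≤ R)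
    (h1 : ∀ k ≤ m, ∀ j : ℕ, j < 2^k → |f ((j+1:ℕ)/2^k) - f ((j:ℕ)/2^k)| ≤ R * rr^k)
    (s t : ℝ) (hs : 0 ≤ s) (ht : t ≤ 1) (hst : s ≤ t) (k : ℕ) (hk : k ≤ m) (hd : t - s ≤ (1/2)^k) :
    |f (dy k s) - f (dy k t)| ≤ R * rr^k := by
  have hp : (0:ℝ) < 2^k := by positivity
  have e1 : ⌊2^k * s⌋₊ ≤ ⌊2^k * t⌋₊ := Nat.floor_le_floor (by gcongr)
  have e2 : ⌊2^k * t⌋₊ ≤ ⌊2^k * s⌋₊ + 1 := by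
    have : 2^k * t ≤ 2^k * s + 1 := by
      have : 2^k * (t - s) ≤ 2^k * (1/2)^k := by gcongr
      rw [← mul_pow] at this
      norm_num at this
      linarith
    calc ⌊2^k * t⌋₊ ≤ ⌊2^k * s + 1⌋₊ := Nat.floor_le_floor this
      _ = _ := Nat.floor_add_one (by positivity)
  have e3 : ⌊2^k * t⌋₊ ≤ 2^k := by
    apply Nat.floor_le_of_le
    push_cast
    nlinarith
  unfold dy
  obtain h | h : ⌊2^k * t⌋₊ = ⌊2^k * s⌋₊ ∨ ⌊2^k * t⌋₊ = ⌊2^k * s⌋₊ + 1 := by omega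
  · rw [h]; simp; have := rr_pos; positivity
  · rw [h, abs_sub_comm]
    exact h1 k hk _ (by omega)

lemma chain_up (f : ℝ → ℝ) (R : ℝ) (m : ℕ) (hR : 0 ≤ R)
    (h1 : ∀ k ≤ m, ∀ j : ℕ, j < 2^k → |f ((j+1:ℕ)/2^k) - f ((j:ℕ)/2^k)| ≤ R * rr^k)
    (s : ℝ) (hs : 0 ≤ s) (hs1 : s ≤ 1) (l : ℕ) (hl : l + 1 ≤ m) :
    |f (dy (l+1) s) - f (dy l s)| ≤ R * rr^(l+1) := by
  have hp : (0:ℝ) < 2^l := by positivity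
  have e1 : 2 * ⌊2^l * s⌋₊ ≤ ⌊2^(l+1) * s⌋₊ := by
    apply Nat.le_floor
    push_cast
    have := Nat.floor_le (show 0 ≤ 2^l * s by positivity)
    rw [pow_succ]; linarith
  have e2 : ⌊2^(l+1) * s⌋₊ < 2 * ⌊2^l * s⌋₊ + 2 := by
    rw [Nat.floor_lt (by positivity)]
    push_cast
    have := Nat.lt_floor_add_one (2^l * s)
    rw [pow_succ]; linarith
  have e3 : ⌊2^(l+1) * s⌋₊ ≤ 2^(l+1) := by
    apply Nat.floor_le_of_le
    push_cast
    have : (0:ℝ) < 2^(l+1) := by positivity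
    nlinarith
  have e4 : dy l s = ((2 * ⌊2^l * s⌋₊ : ℕ) : ℝ) / 2^(l+1) := by
    unfold dy
    push_cast
    rw [pow_succ]; field_simp
  rw [e4]
  unfold dy
  obtain h | h : ⌊2^(l+1) * s⌋₊ = 2 * ⌊2^l * s⌋₊ ∨ ⌊2^(l+1) * s⌋₊ = 2 * ⌊2^l * s⌋₊ + 1 := by omega
  · rw [h]; simp; have := rr_pos; positivity
  · rw [h]
    exact h1 _ hl _ (by omega)

lemma chain_tail (f : ℝ → ℝ) (R : ℝ) (m : ℕ) (hR : 0 ≤ R)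
    (h1 : ∀ k ≤ m, ∀ j : ℕ, j < 2^k → |f ((j+1:ℕ)/2^k) - f ((j:ℕ)/2^k)| ≤ R * rr^k)
    (s : ℝ) (hs : 0 ≤ s) (hs1 : s ≤ 1) (h2 : |f s - f (dy m s)| ≤ R * rr^m) (k : ℕ) (hk : k ≤ m) :
    |f s - f (dy k s)| ≤ 20 * R * rr^k := by
  induction hk using Nat.decreasingInduction with
  | self =>
    have : 0 ≤ R * rr^m := by have := rr_pos; positivity
    linarith
  | of_succ k hk ih =>
    have := chain_up f R m hR h1 s hs hs1 k (by omega)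
    have h3 : |f s - f (dy k s)| ≤ |f s - f (dy (k+1) s)| + |f (dy (k+1) s) - f (dy k s)| := abs_sub_le _ _ _
    have h4 : 0 ≤ R * rr^k := by have := rr_pos; positivity
    have h5 := mul_le_mul_of_nonneg_left rr_le h4
    rw [pow_succ] at *
    nlinarith

lemma chaining (f : ℝ → ℝ) (R : ℝ) (m : ℕ) (hR : 0 ≤ R) (T : Set ℝ) (hT : T ⊆ Icc 0 1)
    (h1 : ∀ k ≤ m, ∀ j : ℕ, j < 2^k → |f ((j+1:ℕ)/2^k) - f ((j:ℕ)/2^k)| ≤ R * rr^k)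
    (h2 : ∀ s ∈ T, |f s - f (dy m s)| ≤ R * rr^m)
    (sep : ∀ s ∈ T, ∀ t ∈ T, s ≠ t → (1/2:ℝ)^m ≤ |s - t|) :
    ∀ s ∈ T, ∀ t ∈ T, |f s - f t| ≤ 82 * R * |s - t| ^ (1/8:ℝ) := by
  intro s hs t ht
  wlog hst : s ≤ t generalizing s t
  · rw [abs_sub_comm, abs_sub_comm s t]; exact this t ht s hs (by linarith)
  obtain rfl | hlt := hst.eq_or_lt
  · simp
  have hs' := hT hs
  have ht' := hT ht
  obtain ⟨k, hk1, hk2⟩ := exists_nat_pow_near_of_lt_one (x := t - s) (y := (1/2:ℝ)) (by linarith)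
    (by linarith [hs'.1, ht'.2]) (by norm_num) (by norm_num)
  have hkm : k ≤ m := by
    by_contra h
    push Not at h
    have h3 := sep s hs t ht hlt.ne
    rw [abs_sub_comm, abs_of_pos (by linarith)] at h3
    have h4 := pow_lt_pow_right_of_lt_one₀ (a := (1/2:ℝ)) (by norm_num) (by norm_num) h
    linarith
  have a1 := chain_tail f R m hR h1 s hs'.1 hs'.2 (h2 s hs) k hkm
  have a2 := chain_tail f R m hR h1 t ht'.1 ht'.2 (h2 t ht) k hkm
  have a3 := chain_step f R m hR h1 s t hs'.1 ht'.2 hst k hkm hk2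
  rw [abs_sub_comm s t, abs_of_pos (show 0 < t - s by linarith)]
  have b1 : rr^(k+1) ≤ (t-s)^(1/8:ℝ) := by
    rw [rr_pow]
    exact Real.rpow_le_rpow (by positivity) hk1.le (by norm_num)
  have b2 : rr^k ≤ 2 * (t-s)^(1/8:ℝ) := by
    have : 0 < rr^k := pow_pos rr_pos k
    have := half_le_rr
    rw [pow_succ] at b1
    nlinarith
  have b3 : |f s - f t| ≤ 41 * R * rr^k := by
    rw [abs_le] at *
    constructor <;> linarith [a1.1, a1.2, a2.1, a2.2, a3.1, a3.2]
  calc _ ≤ 41 * R * rr^k := b3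
    _ ≤ 41 * R * (2 * (t-s)^(1/8:ℝ)) := by gcongr
    _ = _ := by ring
lemma holder_ext (C : ℝ) (hC : 0 ≤ C) (T : Set ℝ) (f : ℝ → ℝ)
    (h : ∀ s ∈ T, ∀ t ∈ T, |f s - f t| ≤ C * |s - t| ^ (1/8:ℝ)) :
    ∃ g : ℝ → ℝ, (∀ s t, |g s - g t| ≤ C * |s - t| ^ (1/8:ℝ)) ∧ ∀ s ∈ T, g s = f s := by
  have h0 : (0:ℝ) < 1/8 := by norm_num
  have h1 : (1/8:ℝ) ≤ 1 := by norm_num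
  let S := Metric.Snowflaking ℝ (1/8) h0 h1
  let e : ℝ → S := Metric.Snowflaking.toSnowflaking
  let e' : S → ℝ := Metric.Snowflaking.ofSnowflaking
  have hL : LipschitzOnWith C.toNNReal (f ∘ e') (e' ⁻¹' T) := by
    apply LipschitzOnWith.of_dist_le_mul
    intro x hx y hy
    rw [Real.coe_toNNReal _ hC]
    exact h _ hx _ hy
  obtain ⟨g, hg, hgT⟩ := hL.extend_real
  refine ⟨g ∘ e, fun s t => ?_, fun s hs => ?_⟩
  · have := hg.dist_le_mul (e s) (e t)
    rw [Real.coe_toNNReal _ hC] at this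
    exact this
  · exact (hgT (x := e s) hs).symm

/-- Hölder ball -/
def KK (C : ℝ) : Set Cz := {x | ∀ s t, |x.1 s - x.1 t| ≤ C * |(s:ℝ) - t| ^ (1/8:ℝ)}

lemma holder_cont (C : ℝ) : Continuous (fun d : ℝ => C * |d| ^ (1/8:ℝ)) := by
  refine continuous_const.mul ?_
  exact continuous_abs.rpow_const (fun x => Or.inr (by norm_num))

lemma KK_compact (C : ℝ) (hC : 0 ≤ C) : IsCompact (KK C) := by
  let z : Set.Icc (0:ℝ) 1 := ⟨0, ⟨le_refl 0, zero_le_one⟩⟩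
  let S : Set C(Set.Icc (0:ℝ) 1, ℝ) :=
    {x | x z = 0 ∧ ∀ s t, |x s - x t| ≤ C * |(s:ℝ) - t| ^ (1/8:ℝ)}
  have hS : IsCompact S := by
    apply ArzelaAscoli.isCompact_of_equicontinuous
    · have : ContinuousMap.toFun '' S = {x : Set.Icc (0:ℝ) 1 → ℝ | x z = 0 ∧ ∀ s t, |x s - x t| ≤ C * |(s:ℝ) - t| ^ (1/8:ℝ)} := by
        ext x
        constructor
        · rintro ⟨y, hy, rfl⟩; exact hy
        · intro hx
          refine ⟨⟨x, ?_⟩, hx, rfl⟩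
          rw [continuous_iff_continuousAt]
          intro s
          rw [ContinuousAt, tendsto_iff_dist_tendsto_zero]
          have h1 : Tendsto (fun t : Set.Icc (0:ℝ) 1 => C * |(t:ℝ) - s| ^ (1/8:ℝ)) (𝓝 s) (𝓝 0) := by
            have : Continuous (fun t : Set.Icc (0:ℝ) 1 => C * |(t:ℝ) - s| ^ (1/8:ℝ)) :=
              (holder_cont C).comp (by fun_prop)
            convert! this.tendsto s using 2
            simp
          exact squeeze_zero (fun _ => dist_nonneg) (fun t => hx.2 t s) h1
      rw [this]
      refine IsCompact.of_isClosed_subset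
        (isCompact_univ_pi (s := fun _ => Icc (-C) C) (fun _ => isCompact_Icc)) ?_ ?_
      · simp only [Set.ofPred_and, Set.ofPred_forall]
        refine IsClosed.inter (isClosed_eq (by fun_prop) (by fun_prop)) ?_
        refine isClosed_iInter fun s => isClosed_iInter fun t => ?_
        exact isClosed_le (by fun_prop) (by fun_prop)
      · rintro x ⟨h0, h⟩ s -
        have := h s z
        rw [h0, sub_zero] at this
        rw [Set.mem_Icc, ← abs_le]
        refine this.trans ?_
        have : |(s:ℝ) - z| ^ (1/8:ℝ) ≤ 1 := by
          apply Real.rpow_le_one (abs_nonneg _) _ (by norm_num)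
          have h1 := s.2.1
          have h2 := s.2.2
          simp only [z, sub_zero]
          rw [abs_le]; constructor <;> linarith
        nlinarith
    · intro s
      rw [Metric.equicontinuousAt_iff]
      intro ε hε
      have h1 : Tendsto (fun t : Set.Icc (0:ℝ) 1 => C * |(s:ℝ) - t| ^ (1/8:ℝ)) (𝓝 s) (𝓝 0) := by
        have : Continuous (fun t : Set.Icc (0:ℝ) 1 => C * |(s:ℝ) - t| ^ (1/8:ℝ)) :=
          (holder_cont C).comp (by fun_prop)
        convert! this.tendsto s using 2
        simp
      obtain ⟨δ, hδ, hd⟩ := Metric.eventually_nhds_iff.1 (h1.eventually (gt_mem_nhds hε))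
      exact ⟨δ, hδ, fun x hx i => (i.2.2 s x).trans_lt (hd hx)⟩
  refine (Topology.IsInducing.isCompact_iff (f := fun x : Cz => x.1) ⟨rfl⟩).2 ?_
  convert hS using 1
  ext x
  constructor
  · rintro ⟨y, hy, rfl⟩; exact ⟨y.2, hy⟩
  · rintro ⟨h0, h⟩; exact ⟨⟨x, h0⟩, h, rfl⟩

lemma mem_proj (t : ℕ → ℝ) (ht : ∀ k, t k ∈ Set.Ioc (0:ℝ) 1) (n : ℕ) (C : ℝ) (hC : 0 ≤ C) (f : ℝ → ℝ)
    (h0 : f 0 = 0)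
    (h : ∀ s ∈ insert 0 (range fun i : Fin n => t i), ∀ s' ∈ insert 0 (range fun i : Fin n => t i),
      |f s - f s'| ≤ C * |s - s'| ^ (1/8:ℝ)) :
    (fun i : Fin n => f (t i)) ∈ proj t ht n '' KK C := by
  obtain ⟨g, hg, hgT⟩ := holder_ext C hC _ f h
  have hc : Continuous g := by
    rw [continuous_iff_continuousAt]
    intro s
    rw [ContinuousAt, tendsto_iff_dist_tendsto_zero]
    have h1 : Tendsto (fun t : ℝ => C * |t - s| ^ (1/8:ℝ)) (𝓝 s) (𝓝 0) := by
      have : Continuous (fun t : ℝ => C * |t - s| ^ (1/8:ℝ)) :=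
        (holder_cont C).comp (by fun_prop)
      convert! this.tendsto s using 2
      simp
    exact squeeze_zero (fun _ => dist_nonneg) (fun t => hg t s) h1
  refine ⟨⟨⟨fun s => g s, by fun_prop⟩, ?_⟩, fun s t => hg s t, ?_⟩
  · simp [hgT 0 (by simp), h0]
  · ext i
    simp [proj, hgT (t i) (by simp)]
open ProbabilityTheory in
lemma pi_gauss_density (n : ℕ) :
    Measure.pi (fun _ : Fin n => gaussianReal 0 1) =
      (volume : Measure (Fin n → ℝ)).withDensity
        (fun x => ENNReal.ofReal (∏ i, gaussianPDFReal 0 1 (x i))) := by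
  apply Measure.pi_eq
  intro s hs
  rw [withDensity_apply _ (MeasurableSet.univ_pi hs), volume_pi, Measure.restrict_pi_pi,
    ← ofReal_integral_eq_lintegral_ofReal]
  · rw [integral_fintype_prod_eq_prod (f := fun _ => gaussianPDFReal 0 1),
      ENNReal.ofReal_prod_of_nonneg]
    · refine Finset.prod_congr rfl fun i _ => ?_
      rw [gaussianReal_apply_eq_integral _ one_ne_zero]
    · intro i _
      exact integral_nonneg (fun x => gaussianPDFReal_nonneg _ _ _)
  · exact Integrable.fintype_prod (f := fun _ => gaussianPDFReal 0 1)
      (fun i => (integrable_gaussianPDFReal 0 1).restrict)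
  · exact ae_of_all _ fun x => Finset.prod_nonneg fun i _ => gaussianPDFReal_nonneg _ _ _

lemma density_id (n : ℕ) (A : Matrix (Fin n) (Fin n) ℝ) (hA : A.det ≠ 0) (hs : Aᵀ = A)
    (x : Fin n → ℝ) :
    |A.det| * ((((2 * Real.pi) ^ n * (A * A).det) ^ (-(1:ℝ)/2 : ℝ)) *
      Real.exp (-((A *ᵥ x) ⬝ᵥ (A * A)⁻¹.mulVec (A *ᵥ x)) / 2)) =
    ∏ i, ProbabilityTheory.gaussianPDFReal 0 1 (x i) := by
  have hu : IsUnit A.det := isUnit_iff_ne_zero.2 hA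
  have e1 : (A *ᵥ x) ⬝ᵥ (A * A)⁻¹.mulVec (A *ᵥ x) = ∑ i, x i ^ 2 := by
    rw [Matrix.mul_inv_rev, Matrix.mulVec_mulVec, Matrix.mul_assoc, Matrix.nonsing_inv_mul _ hu,
      Matrix.mul_one, Matrix.dotProduct_mulVec, ← Matrix.mulVec_transpose, Matrix.mulVec_mulVec,
      Matrix.transpose_nonsing_inv, hs, Matrix.nonsing_inv_mul _ hu, Matrix.one_mulVec]
    simp [dotProduct, sq]
  have e2 : ((2 * Real.pi) ^ n * (A * A).det) ^ (-(1:ℝ)/2 : ℝ) =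
      ((√(2 * Real.pi))⁻¹) ^ n * |A.det|⁻¹ := by
    rw [neg_div, Real.rpow_neg, ← Real.sqrt_eq_rpow, Real.sqrt_mul (by positivity), Matrix.det_mul,
      Real.sqrt_mul_self_eq_abs, mul_inv, inv_pow]
    · congr 2
      rw [Real.sqrt_eq_iff_mul_self_eq (by positivity) (by positivity), ← mul_pow,
        Real.mul_self_sqrt (by positivity)]
    · rw [Matrix.det_mul]
      exact mul_nonneg (by positivity) (mul_self_nonneg _)
  rw [e1, e2]
  simp only [ProbabilityTheory.gaussianPDFReal, Finset.prod_mul_distrib, ← Real.exp_sum]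
  have : |A.det| ≠ 0 := abs_ne_zero.2 hA
  have e3 : ∑ i, (-(x i - 0) ^ 2 / (2 * ((1:NNReal):ℝ))) = -(∑ i, x i ^ 2) / 2 := by
    rw [← Finset.sum_neg_distrib, Finset.sum_div]
    simp
  rw [e3]
  simp
  field_simp

lemma gauss_eq_map_s14 (n : ℕ) (A : Matrix (Fin n) (Fin n) ℝ) (hA : A.det ≠ 0) (hs : Aᵀ = A) :
    gauss n (A * A) = (Measure.pi (fun _ : Fin n => ProbabilityTheory.gaussianReal 0 1)).map
      (fun x => A *ᵥ x) := by
  have hdet : LinearMap.det (Matrix.toLin' A) ≠ 0 := by rwa [LinearMap.det_toLin']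
  have hmap := Real.map_linearMap_volume_pi_eq_smul_volume_pi hdet
  rw [LinearMap.det_toLin'] at hmap
  have hm : Measurable (fun x : Fin n → ℝ => A *ᵥ x) := by fun_prop
  have hvol : (volume : Measure (Fin n → ℝ)) =
      ENNReal.ofReal |A.det| • volume.map (fun x => A *ᵥ x) := by
    have : (fun x : Fin n → ℝ => A *ᵥ x) = Matrix.toLin' A := by ext; simp
    rw [this, hmap, smul_smul, ← ENNReal.ofReal_mul (abs_nonneg _), ← abs_mul, mul_inv_cancel₀ hA]
    simp
  ext s hsm
  rw [Measure.map_apply hm hsm, pi_gauss_density, withDensity_apply _ (hm hsm), gauss,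
    withDensity_apply _ hsm, hvol, Measure.restrict_smul, lintegral_smul_measure,
    setLIntegral_map hsm (by fun_prop) hm, smul_eq_mul, ← lintegral_const_mul _ (by fun_prop)]
  rw [← hvol]
  refine lintegral_congr fun x => ?_
  rw [← density_id n A hA hs, ENNReal.ofReal_mul (abs_nonneg _)]

open ProbabilityTheory in
open scoped MatrixOrder in
lemma gauss_eq_mv (n : ℕ) (M : Matrix (Fin n) (Fin n) ℝ) (hM : M.PosSemidef) (hd : M.det ≠ 0) :
    gauss n M = (multivariateGaussian 0 M).map (WithLp.ofLp) := by
  have hsq : CFC.sqrt M * CFC.sqrt M = M := CFC.sqrt_mul_sqrt_self M hM.nonneg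
  have hps : (CFC.sqrt M).PosSemidef := Matrix.nonneg_iff_posSemidef.1 (CFC.sqrt_nonneg M)
  have hsym : (CFC.sqrt M)ᵀ = CFC.sqrt M := by
    have := hps.1.eq
    rwa [Matrix.conjTranspose_eq_transpose_of_trivial] at this
  have hd' : (CFC.sqrt M).det ≠ 0 := by
    intro h
    apply hd
    rw [← hsq, Matrix.det_mul, h, zero_mul]
  have key := gauss_eq_map_s14 n _ hd' hsym
  rw [hsq] at key
  rw [key, multivariateGaussian, ← map_pi_eq_stdGaussian,
    Measure.map_map, Measure.map_map]
  · congr 1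
    ext x i
    simp [Function.comp]
  all_goals fun_prop

lemma covM_psd (t : ℕ → ℝ) (ht : ∀ k, t k ∈ Set.Ioc (0:ℝ) 1) (n : ℕ) : (covM t n).PosSemidef := by
  have : covM t n = .of fun (s r : Fin n) ↦ volume.real ((Icc 0 (t s)) ∩ (Icc 0 (t r))) := by
    ext i j
    have := (ht i).1.le
    have := (ht j).1.le
    simp [Icc_inter_Icc, covM, *]
  rw [this]
  exact posSemidef_matrix_measure_inter (fun _ ↦ measurableSet_Icc)
    (fun _ ↦ isCompact_Icc.measure_ne_top)

lemma covM_det (t : ℕ → ℝ) (ht : ∀ k, t k ∈ Set.Ioc (0:ℝ) 1) (htinj : Function.Injective t) (n : ℕ) :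
    (covM t n).det ≠ 0 := by
  intro h
  obtain ⟨v, hv, hMv⟩ := Matrix.exists_mulVec_eq_zero_iff.2 h
  have hMv' : ∀ i : Fin n, ∑ k : Fin n, min (t i) (t k) * v k = 0 := fun i => congrFun hMv i
  let S : Finset (Fin n) := Finset.univ.filter fun i => v i ≠ 0
  have hS : S.Nonempty := by
    obtain ⟨i, hi⟩ := Function.ne_iff.1 hv
    exact ⟨i, by simpa [S] using hi⟩
  obtain ⟨i, hiS, hi⟩ := S.exists_max_image (fun i => t i) hS
  have hvi : v i ≠ 0 := by simpa [S] using hiS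
  have hz : ∀ k, k ∉ S → v k = 0 := fun k hk => by simpa [S] using hk
  obtain hS' | hS' := (S.erase i).eq_empty_or_nonempty
  · have h1 := hMv' i
    rw [Finset.sum_eq_single i] at h1
    · simp [(ht i).1.ne', hvi] at h1
    · intro k _ hk
      rw [hz k, mul_zero]
      intro hkS
      have : k ∈ S.erase i := by simp [hk, hkS]
      simp [hS'] at this
    · simp
  · obtain ⟨j, hjS, hj⟩ := (S.erase i).exists_max_image (fun i => t i) hS'
    have hji : j ≠ i := by simp at hjS; exact hjS.1
    have hjS2 : j ∈ S := by simp at hjS; exact hjS.2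
    have hlt : t j < t i := lt_of_le_of_ne (hi j hjS2) (fun h => hji (Fin.ext (htinj h)))
    have h1 : ∑ k : Fin n, (min (t i) (t k) - min (t j) (t k)) * v k = 0 := by
      simp only [sub_mul, Finset.sum_sub_distrib, hMv', sub_zero]
    rw [Finset.sum_eq_single i] at h1
    · rw [min_self, min_eq_left hlt.le] at h1
      have : t i - t j ≠ 0 := by linarith
      simp_all
    · intro k _ hk
      by_cases hkS : k ∈ S
      · have h3 : t k ≤ t j := hj k (by simp [hk, hkS])
        rw [min_eq_right (h3.trans hlt.le), min_eq_right h3]; simp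
      · rw [hz k hkS, mul_zero]
    · simp

open ProbabilityTheory ProbabilityTheory.BrownianReal in
lemma gauss_eq_pf (t : ℕ → ℝ) (ht : ∀ k, t k ∈ Set.Ioc (0:ℝ) 1) (htinj : Function.Injective t)
    (n : ℕ) (I : Finset NNReal) (hI : ∀ i : Fin n, (t i).toNNReal ∈ I) :
    gauss n (covM t n) = (projectiveFamily I).map (fun ω (i : Fin n) => ω ⟨(t i).toNNReal, hI i⟩) := by
  rw [gauss_eq_mv n _ (covM_psd t ht n) (covM_det t ht htinj n)]
  let L : (I → ℝ) →L[ℝ] (Fin n → ℝ) :=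
    ContinuousLinearMap.pi fun i => ContinuousLinearMap.proj ⟨(t i).toNNReal, hI i⟩
  have hL : (fun (ω : I → ℝ) (i : Fin n) => ω ⟨(t i).toNNReal, hI i⟩) = L := rfl
  rw [hL]
  have hg : IsGaussian ((projectiveFamily I).map L) := inferInstance
  apply (MeasurableEquiv.toLp 2 (_ → ℝ)).map_measurableEquiv_injective
  rw [MeasurableEquiv.coe_toLp, Measure.map_map (by fun_prop) (by fun_prop)]
  have hid : (WithLp.toLp 2 ∘ WithLp.ofLp : EuclideanSpace ℝ (Fin n) → EuclideanSpace ℝ (Fin n)) = id := rfl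
  rw [hid, Measure.map_id]
  have hg2 : IsGaussian (((projectiveFamily I).map L).map (WithLp.toLp 2)) := by
    rw [← PiLp.coe_symm_continuousLinearEquiv 2 ℝ]
    infer_instance
  apply IsGaussian.ext
  · simp only [id_eq, integral_id_multivariateGaussian]
    rw [← PiLp.coe_symm_continuousLinearEquiv 2 ℝ, integral_map (by fun_prop) (by fun_prop),
      ContinuousLinearEquiv.integral_comp_comm, ContinuousLinearMap.integral_id_map IsGaussian.integrable_id]
    simp
  rw [← ContinuousLinearMap.toBilinForm_inj]
  refine LinearMap.BilinForm.ext_of_isSymm isPosSemidef_covarianceBilin.isSymm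
        isPosSemidef_covarianceBilin.isSymm fun x ↦ ?_
  simp only [ContinuousLinearMap.toBilinForm_apply]
  rw [covarianceBilin_apply_pi, covarianceBilin_multivariateGaussian (covM_psd t ht n)]
  · simp only [dotProduct, mulVec, Finset.mul_sum]
    refine Finset.sum_congr rfl fun i _ => Finset.sum_congr rfl fun j _ => ?_
    rw [covariance_map]
    · have : cov[(fun x : Fin n → ℝ => x i) ∘ L, (fun x => x j) ∘ L; projectiveFamily I]
         = covM t n i j := by
        refine (covariance_eval_projectiveFamily (I := I) ⟨(t i).toNNReal, hI i⟩ ⟨(t j).toNNReal, hI j⟩).trans ?_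
        simp [covM, (ht i).1.le, (ht j).1.le]
      rw [this]; ring
    any_goals exact Measurable.aestronglyMeasurable (by fun_prop)
    fun_prop
  · exact fun i ↦ (IsGaussian.hasGaussianLaw_id.eval i).memLp_two

open ProbabilityTheory in
lemma gauss_tail (v : NNReal) (a : ℝ) (ha : 0 < a) :
    gaussianReal 0 v {x | a < |x|} ≤ ENNReal.ofReal (16 * v ^ 2 / a ^ 4) := by
  obtain rfl | hv := eq_or_ne v 0
  · rw [gaussianReal_zero_var, Measure.dirac_apply' _ (measurableSet_lt (by fun_prop) (by fun_prop))]
    simp [ha.le]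
  have hv' : (0:ℝ) < v := by positivity
  have hsg : HasSubgaussianMGF id v (gaussianReal 0 v) := by
    refine ⟨fun s => ?_, fun s => ?_⟩
    · simpa using integrable_exp_mul_gaussianReal s
    · simp [mgf_id_gaussianReal]
  have h1 := hsg.measure_ge_le ha.le
  have h2 := hsg.neg.measure_ge_le ha.le
  have h3 : (gaussianReal 0 v).real {x | a < |x|} ≤ 2 * Real.exp (-a ^ 2 / (2 * v)) := by
    calc _ ≤ (gaussianReal 0 v).real ({x | a ≤ id x} ∪ {x | a ≤ (-id) x}) := by
          refine measureReal_mono ?_ (measure_ne_top _ _)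
          intro x hx
          simp only [mem_ofPred_eq, lt_abs] at hx
          exact hx.imp le_of_lt le_of_lt
      _ ≤ _ := by
          refine (measureReal_union_le _ _).trans ?_
          linarith
  have h4 : 2 * Real.exp (-a ^ 2 / (2 * v)) ≤ 16 * v ^ 2 / a ^ 4 := by
    set y := a ^ 2 / (2 * v) with hy
    have hy0 : 0 < y := by positivity
    have e1 : -a ^ 2 / (2 * v) = -y := by rw [hy]; ring
    have e2 : (16:ℝ) * v ^ 2 / a ^ 4 = 4 / y ^ 2 := by rw [hy]; field_simp; ring
    rw [e1, e2, Real.exp_neg, le_div_iff₀ (by positivity)]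
    have := Real.quadratic_le_exp_of_nonneg hy0.le
    have hp := Real.exp_pos y
    rw [mul_assoc, inv_mul_eq_div, mul_div_assoc', div_le_iff₀ hp]
    nlinarith
  rw [← ofReal_measureReal]
  exact ENNReal.ofReal_le_ofReal (h3.trans h4)

lemma level_bound (R : ℝ) (hR : 0 < R) (k : ℕ) :
    16 * ((1/2:ℝ)^k)^2 / (R * rr^k)^4 = 16 / R^4 * rr^(12*k) := by
  have h : ((1/2:ℝ)^k)^2 = rr^(12*k) * (rr^k)^4 := by
    rw [← rr_pow8]; ring
  have := rr_pos
  rw [h, mul_pow]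
  field_simp

lemma level_sum (m : ℕ) : ∑ k ∈ Finset.range (m+1), (2:ℝ)^k * rr^(12*k) ≤ 6 := by
  have h : ∀ k, (2:ℝ)^k * rr^(12*k) = (rr^4)^k := by
    intro k
    rw [show 12 * k = 8 * k + 4 * k by ring, pow_add, pow_mul, rr_pow8, ← mul_assoc, ← mul_pow,
      pow_mul]
    norm_num
  simp_rw [h]
  have h0 := rr_pos
  have h1 : rr^4 ≤ (20/21)^4 := pow_le_pow_left₀ h0.le rr_le 4
  have h2 : rr^4 < 1 := h1.trans_lt (by norm_num)
  have h3 : (∑ k ∈ Finset.range (m+1), (rr^4)^k) * (1 - rr^4) = 1 - (rr^4)^(m+1) := geom_sum_mul_neg _ _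
  have h4 : 0 < (rr^4)^(m+1) := by positivity
  have h5 : 1/6 ≤ 1 - rr^4 := by
    have : (20/21:ℝ)^4 ≤ 5/6 := by norm_num
    linarith
  nlinarith

lemma union_bound {Ω : Type*} [MeasurableSpace Ω] (P : Measure Ω) (f : ℝ → Ω → ℝ) (m n : ℕ)
    (τ : Fin n → ℝ) (R : ℝ) (hR : 0 < R) (hm : n * rr^(12*m) ≤ 1)
    (h0 : P {ω | f 0 ω ≠ 0} = 0)
    (h1 : ∀ k ≤ m, ∀ j : ℕ, j < 2^k → P {ω | R * rr^k < |f ((j+1:ℕ)/2^k) ω - f ((j:ℕ)/2^k) ω|}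
      ≤ ENNReal.ofReal (16 * ((1/2:ℝ)^k)^2 / (R * rr^k)^4))
    (h2 : ∀ i, P {ω | R * rr^m < |f (τ i) ω - f (dy m (τ i)) ω|}
      ≤ ENNReal.ofReal (16 * ((1/2:ℝ)^m)^2 / (R * rr^m)^4)) :
    P ({ω | f 0 ω ≠ 0} ∪
      ((⋃ k ∈ Finset.range (m+1), ⋃ j ∈ Finset.range (2^k),
        {ω | R * rr^k < |f ((j+1:ℕ)/2^k) ω - f ((j:ℕ)/2^k) ω|}) ∪
      ⋃ i ∈ (Finset.univ : Finset (Fin n)), {ω | R * rr^m < |f (τ i) ω - f (dy m (τ i)) ω|}))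
      ≤ ENNReal.ofReal (112 / R^4) := by
  have hrr := rr_pos
  refine (measure_union_le _ _).trans ?_
  rw [h0, zero_add]
  refine (measure_union_le _ _).trans ?_
  have a1 : P (⋃ k ∈ Finset.range (m+1), ⋃ j ∈ Finset.range (2^k),
        {ω | R * rr^k < |f ((j+1:ℕ)/2^k) ω - f ((j:ℕ)/2^k) ω|}) ≤ ENNReal.ofReal (96 / R^4) := by
    calc _ ≤ ∑ k ∈ Finset.range (m+1), ∑ j ∈ Finset.range (2^k),
            ENNReal.ofReal (16 / R^4 * rr^(12*k)) := by
          refine (measure_biUnion_finset_le _ _).trans (Finset.sum_le_sum fun k hk => ?_)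
          refine (measure_biUnion_finset_le _ _).trans (Finset.sum_le_sum fun j hj => ?_)
          rw [← level_bound R hR]
          exact h1 k (by simp at hk; omega) j (by simpa using hj)
      _ = ENNReal.ofReal (∑ k ∈ Finset.range (m+1), ∑ j ∈ Finset.range (2^k),
            (16 / R^4 * rr^(12*k))) := by
          rw [ENNReal.ofReal_sum_of_nonneg (fun k _ => Finset.sum_nonneg fun j _ => by positivity)]
          refine Finset.sum_congr rfl fun k _ => ?_
          rw [ENNReal.ofReal_sum_of_nonneg (fun j _ => by positivity)]
      _ ≤ _ := by
          apply ENNReal.ofReal_le_ofReal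
          have := level_sum m
          have e : ∑ k ∈ Finset.range (m+1), ∑ j ∈ Finset.range (2^k), (16 / R^4 * rr^(12*k))
              = 16 / R^4 * ∑ k ∈ Finset.range (m+1), (2:ℝ)^k * rr^(12*k) := by
            rw [Finset.mul_sum]
            refine Finset.sum_congr rfl fun k _ => ?_
            rw [Finset.sum_const]
            simp
            ring
          rw [e, show 96 / R^4 = 16 / R^4 * 6 by ring]
          gcongr
  have a2 : P (⋃ i ∈ (Finset.univ : Finset (Fin n)), {ω | R * rr^m < |f (τ i) ω - f (dy m (τ i)) ω|})
      ≤ ENNReal.ofReal (16 / R^4) := by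
    calc _ ≤ ∑ i : Fin n, ENNReal.ofReal (16 / R^4 * rr^(12*m)) := by
          refine (measure_biUnion_finset_le _ _).trans (Finset.sum_le_sum fun i hk => ?_)
          rw [← level_bound R hR]
          exact h2 i
      _ = ENNReal.ofReal (∑ i : Fin n, (16 / R^4 * rr^(12*m))) := by
          rw [ENNReal.ofReal_sum_of_nonneg (fun j _ => by positivity)]
      _ ≤ _ := by
          apply ENNReal.ofReal_le_ofReal
          rw [Finset.sum_const]
          simp
          calc _ = 16 / R^4 * (n * rr^(12*m)) := by ring
            _ ≤ 16 / R^4 * 1 := by gcongr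
            _ = _ := by ring
  refine (add_le_add a1 a2).trans ?_
  rw [← ENNReal.ofReal_add (by positivity) (by positivity)]
  apply ENNReal.ofReal_le_ofReal
  apply le_of_eq
  ring

lemma exists_m (n : ℕ) (T : Set ℝ) (hT : T.Finite) : ∃ m : ℕ, n * rr^(12*m) ≤ 1 ∧
    ∀ s ∈ T, ∀ t ∈ T, s ≠ t → (1/2:ℝ)^m ≤ |s-t| := by
  have h0 := rr_pos
  have e1 : ∀ᶠ m : ℕ in atTop, n * rr^(12*m) ≤ 1 := by
    have : Tendsto (fun m : ℕ => (n:ℝ) * (rr^12)^m) atTop (𝓝 ((n:ℝ) * 0)) :=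
      (tendsto_pow_atTop_nhds_zero_of_lt_one (by positivity)
        (pow_lt_one₀ h0.le (rr_le.trans_lt (by norm_num)) (by norm_num))).const_mul _
    rw [mul_zero] at this
    filter_upwards [this.eventually (ge_mem_nhds one_pos)] with m hm
    rwa [pow_mul]
  have e2 : ∀ᶠ m : ℕ in atTop, ∀ s ∈ T, ∀ t ∈ T, s ≠ t → (1/2:ℝ)^m ≤ |s-t| := by
    rw [hT.eventually_all]
    intro s _
    rw [hT.eventually_all]
    intro t _
    by_cases h : s = t
    · exact Eventually.of_forall fun m hh => absurd h hh
    · have := tendsto_pow_atTop_nhds_zero_of_lt_one (r := (1/2:ℝ)) (by norm_num) (by norm_num)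
      filter_upwards [this.eventually (ge_mem_nhds (abs_pos.2 (sub_ne_zero.2 h)))] with m hm _
      exact hm
  exact (e1.and e2).exists

open ProbabilityTheory ProbabilityTheory.BrownianReal in
lemma main_bound (t : ℕ → ℝ) (ht : ∀ k, t k ∈ Set.Ioc (0:ℝ) 1) (htinj : Function.Injective t)
    (n : ℕ) (R : ℝ) (hR : 0 < R) :
    1 ≤ gauss n (covM t n) (proj t ht n '' KK (82 * R)) + ENNReal.ofReal (112 / R^4) := by
  classical
  set T : Set ℝ := insert 0 (range fun i : Fin n => t i) with hT
  have hTfin : T.Finite := (finite_range _).insert _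
  have hT01 : T ⊆ Icc 0 1 := by
    rintro s (rfl | ⟨i, rfl⟩)
    · simp
    · exact Ioc_subset_Icc_self (ht i)
  obtain ⟨m, hm1, hm2⟩ := exists_m n T hTfin
  let D : Finset ℝ := (Finset.range (m+1)).biUnion fun k =>
    (Finset.range (2^k+1)).image fun j : ℕ => (j:ℝ)/2^k
  let I : Finset NNReal := (hTfin.toFinset ∪ D).image Real.toNNReal
  have hTI : ∀ s ∈ T, s.toNNReal ∈ I := fun s hs =>
    Finset.mem_image_of_mem _ (Finset.mem_union_left _ (by simpa using hs))
  have hDI : ∀ k ≤ m, ∀ j : ℕ, j ≤ 2^k → ((j:ℝ)/2^k).toNNReal ∈ I := fun k hk j hj =>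
    Finset.mem_image_of_mem _ (Finset.mem_union_right _ (by
      simp only [D, Finset.mem_biUnion, Finset.mem_image, Finset.mem_range]
      exact ⟨k, by omega, j, by omega, rfl⟩))
  let P := projectiveFamily I
  let f : ℝ → (I → ℝ) → ℝ := fun s ω => if h : s.toNNReal ∈ I then ω ⟨s.toNNReal, h⟩ else 0
  have tail : ∀ s s' : ℝ, 0 ≤ s → 0 ≤ s' → s.toNNReal ∈ I → s'.toNNReal ∈ I → ∀ a > 0, ∀ d : ℝ,
      |s - s'| ≤ d → P {ω | a < |f s ω - f s' ω|} ≤ ENNReal.ofReal (16 * d^2 / a^4) := by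
    intro s s' hs hs' hI hI' a ha d hd
    have hmp := measurePreserving_eval_sub_eval_projectiveFamily I ⟨s.toNNReal, hI⟩ ⟨s'.toNNReal, hI'⟩
    have := gauss_tail (nndist (s.toNNReal : ℝ) (s'.toNNReal : ℝ)) a ha
    have hms : MeasurableSet {x : ℝ | a < |x|} := measurableSet_lt (by fun_prop) (by fun_prop)
    have h2 := hmp.measure_preimage hms.nullMeasurableSet
    have h3 : {ω | a < |f s ω - f s' ω|} = (fun x : I → ℝ => x ⟨s.toNNReal, hI⟩ - x ⟨s'.toNNReal, hI'⟩) ⁻¹' {x : ℝ | a < |x|} := by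
      ext ω
      simp [f, hI, hI']
    rw [h3]
    refine h2.le.trans (this.trans ?_)
    apply ENNReal.ofReal_le_ofReal
    have : (nndist (s.toNNReal : ℝ) (s'.toNNReal : ℝ) : ℝ) ≤ d := by
      rw [coe_nndist, Real.dist_eq, Real.coe_toNNReal _ hs, Real.coe_toNNReal _ hs']
      exact hd
    gcongr
  have hdy : ∀ i : Fin n, 0 ≤ dy m (t i) ∧ (dy m (t i)).toNNReal ∈ I ∧ |t i - dy m (t i)| ≤ (1/2)^m := by
    intro i
    have h2 : (0:ℝ) < 2^m := by positivity
    refine ⟨by unfold dy; positivity, hDI m le_rfl _ ?_, ?_⟩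
    · apply Nat.floor_le_of_le
      push_cast
      nlinarith [(ht i).2]
    · have a1 := Nat.floor_le (a := 2^m * t i) (by have := (ht i).1; positivity)
      have a2 := Nat.lt_floor_add_one (2^m * t i)
      have : t i - dy m (t i) = (2^m * t i - ⌊2^m * t i⌋₊) / 2^m := by
        unfold dy; field_simp
      rw [this, abs_of_nonneg (div_nonneg (by linarith) h2.le), one_div, inv_pow, ← one_div]
      gcongr
      linarith
  have hub := union_bound P f m n (fun i => t i) R hR hm1 ?_ ?_ ?_
  · set S := proj t ht n '' KK (82 * R)
    set Bad := ({ω | f 0 ω ≠ 0} ∪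
      ((⋃ k ∈ Finset.range (m+1), ⋃ j ∈ Finset.range (2^k),
        {ω | R * rr^k < |f ((j+1:ℕ)/2^k) ω - f ((j:ℕ)/2^k) ω|}) ∪
      ⋃ i ∈ (Finset.univ : Finset (Fin n)), {ω | R * rr^m < |f (t i) ω - f (dy m (t i)) ω|})) with hBad
    have hti : ∀ i : Fin n, (t i).toNNReal ∈ I := fun i => hTI _ (Or.inr ⟨i, rfl⟩)
    rw [gauss_eq_pf t ht htinj n I hti]
    have hcov : univ ⊆ ((fun (ω : I → ℝ) (i : Fin n) => ω ⟨(t i).toNNReal, hti i⟩) ⁻¹' S) ∪ Bad := by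
      intro ω _
      by_cases hω : ω ∈ Bad
      · exact Or.inr hω
      left
      simp only [hBad, mem_union, mem_iUnion, mem_ofPred_eq, not_or, not_exists, not_lt, not_not,
        Finset.mem_range, Finset.mem_univ, true_and] at hω
      obtain ⟨b0, b1, b2⟩ := hω
      have hch := chaining (fun s => f s ω) R m hR.le T hT01
        (fun k hk j hj => b1 k (by omega) j hj) (by
          rintro s (rfl | ⟨i, rfl⟩)
          · have : dy m 0 = 0 := by simp [dy]
            have := rr_pos
            simp only [*, sub_self, abs_zero]
            positivity
          · exact b2 i trivial) hm2
      have := mem_proj t ht n (82 * R) (by positivity) (fun s => f s ω) b0 hch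
      have e : (fun i : Fin n => f (t i) ω) = fun i : Fin n => ω ⟨(t i).toNNReal, hti i⟩ := by
        ext i
        simp [f, hti i]
      rw [e] at this
      exact this
    have : (1:ℝ≥0∞) = P univ := measure_univ.symm
    rw [this]
    refine (measure_mono hcov).trans ((measure_union_le _ _).trans (add_le_add ?_ hub))
    exact Measure.le_map_apply (measurable_pi_lambda _ fun i => measurable_pi_apply _).aemeasurable _
  · have hz : (0:ℝ).toNNReal ∈ I := hTI 0 (Or.inl rfl)
    have hmp := measurePreserving_eval_projectiveFamily (I := I) ⟨(0:ℝ).toNNReal, hz⟩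
    have h2 := hmp.measure_preimage (s := {x : ℝ | x ≠ 0}) (measurableSet_singleton (0:ℝ)).compl.nullMeasurableSet
    have h3 : {ω | f 0 ω ≠ 0} = (fun x : I → ℝ => x ⟨(0:ℝ).toNNReal, hz⟩) ⁻¹' {x : ℝ | x ≠ 0} := by
      ext ω
      simp only [f, hz, mem_ofPred_eq, mem_preimage, dif_pos]
    rw [h3]
    refine h2.trans ?_
    simp [gaussianReal_zero_var]
  · intro k hk j hj
    have := rr_pos
    refine tail _ _ (by positivity) (by positivity) (hDI k hk _ hj) (hDI k hk _ hj.le) _ (by positivity) _ ?_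
    push_cast
    rw [← sub_div, add_sub_cancel_left, abs_of_nonneg (by positivity)]
    simp
  · intro i
    have := rr_pos
    exact tail _ _ (ht i).1.le (hdy i).1 (hTI _ (Or.inr ⟨i, rfl⟩)) (hdy i).2.1 _ (by positivity) _ (hdy i).2.2

lemma gauss_le_one (t : ℕ → ℝ) (ht : ∀ k, t k ∈ Set.Ioc (0:ℝ) 1) (htinj : Function.Injective t)
    (n : ℕ) (S : Set (Fin n → ℝ)) : gauss n (covM t n) S ≤ 1 := by
  rw [gauss_eq_mv n _ (covM_psd t ht n) (covM_det t ht htinj n)]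
  have := Measure.isProbabilityMeasure_map
    (μ := ProbabilityTheory.multivariateGaussian 0 (covM t n)) (f := WithLp.ofLp) (by fun_prop)
  exact prob_le_one

/-- the supremum of `φ(K)` over all compact `K ⊆ C` equals `1`,
i.e. `μ(C) = 1`. -/
theorem stmt14 (t : ℕ → ℝ) (ht : ∀ k, t k ∈ Set.Ioc (0:ℝ) 1)
    (htinj : Function.Injective t)
    (htdense : Set.Icc (0:ℝ) 1 ⊆ closure (Set.range t)) :
    mu t ht Set.univ = 1 := by
  apply le_antisymm
  · refine iSup_le fun K => iSup_le fun _ => iSup_le fun _ => ?_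
    exact (iInf_le _ 0).trans (gauss_le_one t ht htinj _ _)
  · have key : ∀ R : ℕ, 0 < R → 1 ≤ mu t ht Set.univ + ENNReal.ofReal (112 / (R:ℝ)^4) := by
      intro R hR
      have hR' : (0:ℝ) < R := by exact_mod_cast hR
      rw [← tsub_le_iff_right]
      refine le_trans ?_ (le_iSup_of_le (KK (82 * R)) (le_iSup_of_le (subset_univ _)
        (le_iSup_of_le (KK_compact _ (by positivity)) le_rfl)))
      refine le_iInf fun n => ?_
      rw [tsub_le_iff_right]
      exact main_bound t ht htinj (n+1) R hR'
    have hlim : Tendsto (fun R : ℕ => mu t ht Set.univ + ENNReal.ofReal (112 / (R:ℝ)^4)) atTop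
        (𝓝 (mu t ht Set.univ + ENNReal.ofReal 0)) := by
      refine tendsto_const_nhds.add (ENNReal.tendsto_ofReal ?_)
      exact tendsto_const_nhds.div_atTop
        ((tendsto_pow_atTop (by norm_num)).comp tendsto_natCast_atTop_atTop)
    rw [ENNReal.ofReal_zero, add_zero] at hlim
    exact ge_of_tendsto hlim ((eventually_gt_atTop 0).mono key)

end
end
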